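/- (Optimal balanced supersaturation) Let k ≥ 4 be an integer, let ε > 0, and let H be a 2-contractible ℓ-overlapping k-tree with t edges and cross-cut number σ = σ(H). Then there exist constants c = c(ε,H) > 0 and c' = c'(ε,H) > 0 such that for all sufficiently large n the following holds: if F is a k-graph on [n] with |F| = a·C(n,k−1) where a ≥ σ − 1 + ε, then there exists a collection K of copies of H in F such that |K| ≥ c'·a·n^{k−1}·(a·n^{k−ℓ−1})^{t−1} and for all 1 ≤ b ≤ t, Δ_b(K) ≤ c·τ^{b−1}·|K|/|F|, where τ := 1/(a·n^{k−ℓ−1}). -/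

import Mathlib

open Finset Filter

attribute [local instance] Classical.propDecidable

/-- The vertex set `[n] = {1,…,n}`. -/
def vtx (n : ℕ) : Finset ℕ := Finset.Icc 1 n

/-- `F` is a `k`-graph on `[n]`: a family of `k`-element subsets of `[n]`. -/
def IsKGraphOn (k n : ℕ) (F : Finset (Finset ℕ)) : Prop :=
  ∀ E ∈ F, E ⊆ vtx n ∧ E.card = k

/-- The vertex set of a hypergraph (union of its edges). -/
def vertexSet {α : Type} [DecidableEq α] (H : Finset (Finset α)) : Finset α := H.sup id

/-- The degree of a vertex: the number of edges containing it. -/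
def vdeg {α : Type} [DecidableEq α] (H : Finset (Finset α)) (v : α) : ℕ :=
  (H.filter fun E => v ∈ E).card

/-- Hypertrees, defined recursively: a single edge is a hypertree, and a hypertree grows
by adding a new leaf edge `E` whose intersection with the current vertex set equals its
intersection with some existing (parent) edge `F`. -/
inductive IsHypertree {α : Type} [DecidableEq α] : Finset (Finset α) → Prop
  | single (E : Finset α) : IsHypertree {E}
  | grow {H : Finset (Finset α)} (E F : Finset α) (hH : IsHypertree H) (hE : E ∉ H)
      (hF : F ∈ H) (hint : E ∩ vertexSet H = E ∩ F) : IsHypertree (insert E H)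

/-- A `k`-tree: a `k`-uniform hypertree. -/
def IsKTree {α : Type} [DecidableEq α] (k : ℕ) (H : Finset (Finset α)) : Prop :=
  IsHypertree H ∧ ∀ E ∈ H, E.card = k

/-- A hypergraph is 2-contractible if every edge contains at least two vertices of degree 1. -/
def TwoContractible {α : Type} [DecidableEq α] (H : Finset (Finset α)) : Prop :=
  ∀ E ∈ H, 2 ≤ (E.filter fun v => vdeg H v = 1).card

/-- `S` is a cross-cut of `H`: every edge meets `S` in exactly one vertex. -/
def IsCrosscut {α : Type} [DecidableEq α] (H : Finset (Finset α)) (S : Finset α) : Prop :=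
  ∀ E ∈ H, (E ∩ S).card = 1

/-- `σ` is the cross-cut number of `H`: the minimum size of a cross-cut. -/
def IsCrosscutNumber {α : Type} [DecidableEq α] (H : Finset (Finset α)) (σ : ℕ) : Prop :=
  IsLeast {m | ∃ S : Finset α, IsCrosscut H S ∧ S.card = m} σ

/-- A hypergraph is `ℓ`-overlapping if any two distinct edges meet in at most `ℓ` vertices. -/
def Overlapping {α : Type} [DecidableEq α] (ℓ : ℕ) (H : Finset (Finset α)) : Prop :=
  ∀ E ∈ H, ∀ F ∈ H, E ≠ F → (E ∩ F).card ≤ ℓ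

/-- `K` is (the edge set of) a copy of `H`, i.e. the image of `H` under a map that is
injective on the vertex set of `H`. -/
def IsCopyOf {α : Type} [DecidableEq α] (H : Finset (Finset α)) (K : Finset (Finset ℕ)) : Prop :=
  ∃ φ : α → ℕ, Set.InjOn φ ↑(vertexSet H) ∧ K = H.image fun E => E.image φ

/-- `F` contains no subgraph isomorphic to `H`. -/
def HFree {α : Type} [DecidableEq α] (H : Finset (Finset α)) (F : Finset (Finset ℕ)) : Prop :=
  ∀ K ⊆ F, ¬ IsCopyOf H K

/-- The collection of copies of `H` in `F` (as distinct subgraphs of `F`). -/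
noncomputable def copies {α : Type} [DecidableEq α] (H : Finset (Finset α))
    (F : Finset (Finset ℕ)) : Finset (Finset (Finset ℕ)) :=
  F.powerset.filter (IsCopyOf H)

/-- The number of `H`-free `k`-graphs on the vertex set `[n]`. -/
noncomputable def forb {α : Type} [DecidableEq α] (n k : ℕ) (H : Finset (Finset α)) : ℕ :=
  (((vtx n).powersetCard k).powerset.filter (HFree H)).card

/-- `H` is a `k`-uniform linear cycle of length `ℓ`. -/
def IsLinearCycle {α : Type} [DecidableEq α] (k ℓ : ℕ) (H : Finset (Finset α)) : Prop :=
  ∃ E : ℕ → Finset α,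
    (∀ i < ℓ, (E i).card = k) ∧
    (∀ i < ℓ, ∀ j < ℓ, i ≠ j → E i ≠ E j) ∧
    (∀ i < ℓ, (E i ∩ E ((i + 1) % ℓ)).card = 1) ∧
    (∀ i < ℓ, ∀ j < ℓ, i ≠ j → E i ∩ E ((i + 1) % ℓ) ≠ E j ∩ E ((j + 1) % ℓ)) ∧
    (∀ i < ℓ, ∀ j < ℓ, i ≠ j → (i + 1) % ℓ ≠ j → (j + 1) % ℓ ≠ i → Disjoint (E i) (E j)) ∧
    H = (Finset.range ℓ).image E

/-- `(X 0, …, X (k-1))` is a `k`-partition of `F`. -/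
def IsKPartition (k : ℕ) (F : Finset (Finset ℕ)) (X : Fin k → Finset ℕ) : Prop :=
  (∀ i j, i ≠ j → Disjoint (X i) (X j)) ∧ ∀ E ∈ F, ∀ i, (E ∩ X i).card = 1

/-- The `J`-projection of an edge. -/
def projJ {k : ℕ} (X : Fin k → Finset ℕ) (J : Finset (Fin k)) (E : Finset ℕ) : Finset ℕ :=
  E ∩ J.sup X

/-- The pattern of a vertex set. -/
def pattern {k : ℕ} (X : Fin k → Finset ℕ) (D : Finset ℕ) : Finset (Fin k) :=
  Finset.univ.filter fun i => (D ∩ X i).Nonempty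

/-- `MI(F)`: the patterns of intersections of pairs of distinct edges. -/
noncomputable def MI {k : ℕ} (F : Finset (Finset ℕ)) (X : Fin k → Finset ℕ) :
    Finset (Finset (Fin k)) :=
  ((F ×ˢ F).filter fun p => p.1 ≠ p.2).image fun p => pattern X (p.1 ∩ p.2)

/-- The link of a vertex set `D` in `F`. -/
def link {α : Type} [DecidableEq α] (F : Finset (Finset α)) (D : Finset α) :
    Finset (Finset α) :=
  (F.filter fun E => D ⊆ E).image fun E => E \ D

/-- The degree of a vertex set `D` in `F`: the size of its link. -/
def setDeg {α : Type} [DecidableEq α] (F : Finset (Finset α)) (D : Finset α) : ℕ :=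
  (link F D).card

/-- A nonempty hypergraph is `s`-diverse if every vertex has degree less than `|H|/s`. -/
def SDiverse {α : Type} [DecidableEq α] (s : ℕ) (H : Finset (Finset α)) : Prop :=
  H.Nonempty ∧ ∀ v : α, s * vdeg H v < H.card

/-- `D` is `s`-strong in `F` if its link is `s`-diverse. -/
def SStrong {α : Type} [DecidableEq α] (s : ℕ) (F : Finset (Finset α)) (D : Finset α) : Prop :=
  SDiverse s (link F D)

/-- `F`, with `k`-partition `X`, is `s`-super-homogeneous: for every `J ∈ MI(F)` and every
edge `E ∈ F`, the projection `E_J` is `s`-strong and `d_F(E_J) ≥ max{s, |F|/(2k·n^|J|)}`. -/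
def SuperHomogeneous (n k s : ℕ) (F : Finset (Finset ℕ)) (X : Fin k → Finset ℕ) : Prop :=
  ∀ J ∈ MI F X, ∀ E ∈ F,
    SStrong s F (projJ X J E) ∧
    s ≤ setDeg F (projJ X J E) ∧
    (F.card : ℝ) / (2 * k * (n : ℝ) ^ J.card) ≤ (setDeg F (projJ X J E) : ℝ)

/-- The rank of a family of subsets of `[k]`: the minimum size of a set `D ⊆ [k]` contained
in no member of the family. -/
noncomputable def rankFam (k : ℕ) (𝒥 : Finset (Finset (Fin k))) : ℕ :=
  sInf {d | ∃ D : Finset (Fin k), D.card = d ∧ ∀ J ∈ 𝒥, ¬ D ⊆ J}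

/-- A family of subsets of `[k]` is of type 1 if it contains the full power set of some
`(k-2)`-set `B`. -/
def TypeOne (k : ℕ) (𝒥 : Finset (Finset (Fin k))) : Prop :=
  ∃ B : Finset (Fin k), B.card = k - 2 ∧ ∀ S ⊆ B, S ∈ 𝒥

/-- The constant `c(k,s) = k!/(k^k·(2s(1+2^k))^(2^k))`. -/
noncomputable def cks (k s : ℕ) : ℝ :=
  (Nat.factorial k : ℝ) / ((k : ℝ) ^ k * (2 * (s : ℝ) * (1 + 2 ^ k)) ^ (2 ^ k))

/-- Degree of a set of vertices in a (uniform) hypergraph `K`: number of edges containing it. -/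
def uDeg {α : Type} [DecidableEq α] (K : Finset (Finset α)) (S : Finset α) : ℕ :=
  (K.filter fun e => S ⊆ e).card

/-- A `t`-uniform hypergraph is `d`-graded if `d_K(S) ≤ d^(t-|S|)` for all `S` with
`1 ≤ |S| ≤ t`. -/
def Graded {α : Type} [DecidableEq α] (t : ℕ) (d : ℝ) (K : Finset (Finset α)) : Prop :=
  ∀ S : Finset α, 1 ≤ S.card → S.card ≤ t → (uDeg K S : ℝ) ≤ d ^ (t - S.card)

/-- `S` is saturated by `K`: `d_K(S) = ⌊d^(t-|S|)⌋`. -/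
def Saturated {α : Type} [DecidableEq α] (t : ℕ) (d : ℝ) (K : Finset (Finset α))
    (S : Finset α) : Prop :=
  uDeg K S = ⌊d ^ (t - S.card)⌋₊

/-- `S` is admissible: no nonempty subset of `S` is saturated. -/
def Admissible {α : Type} [DecidableEq α] (t : ℕ) (d : ℝ) (K : Finset (Finset α))
    (S : Finset α) : Prop :=
  ∀ S' ⊆ S, S'.Nonempty → ¬ Saturated t d K S'

/-- `Z_K(S)`: the vertices `v` such that `S ∪ {v}` is inadmissible and `{v}` is not
saturated. -/
noncomputable def Zset {α : Type} [DecidableEq α] (t : ℕ) (d : ℝ) (K : Finset (Finset α))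
    (S : Finset α) : Finset α :=
  (vertexSet K).filter fun v => ¬ Admissible t d K (insert v S) ∧ ¬ Saturated t d K {v}

/-- `ex(G,H)`: the maximum number of edges of an `H`-free subgraph of `G`. -/
noncomputable def exIn {α : Type} [DecidableEq α] (H : Finset (Finset α))
    (G : Finset (Finset ℕ)) : ℕ :=
  (G.powerset.filter (HFree H)).sup Finset.card

/-- The probability, in the random `k`-graph `G^(k)(n,p)` (each `k`-subset of `[n]` is an
edge independently with probability `p`), of the event `A`. -/
noncomputable def probEvent (k n : ℕ) (p : ℝ) (A : Finset (Finset ℕ) → Prop) : ℝ :=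
  ∑ G ∈ ((vtx n).powersetCard k).powerset.filter A,
    p ^ G.card * (1 - p) ^ (((vtx n).powersetCard k).card - G.card)


/-! ### Generic finite combinatorics -/

theorem pigeon {X C : Type} [Fintype C] [Nonempty C] (s : Finset X) (f : X → C) :
    ∃ c, s.card ≤ Fintype.card C * (s.filter (fun x => f x = c)).card := by
  obtain ⟨c, -, hc⟩ := Finset.exists_max_image (Finset.univ : Finset C)
    (fun c => (s.filter (fun x => f x = c)).card) Finset.univ_nonempty
  refine ⟨c, ?_⟩
  have h1 : s.card = ∑ c ∈ (Finset.univ : Finset C), (s.filter (fun x => f x = c)).card :=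
    Finset.card_eq_sum_card_fiberwise (fun x _ => Finset.mem_coe.2 (Finset.mem_univ (f x)))
  rw [h1]
  have := Finset.sum_le_card_nsmul (Finset.univ : Finset C)
    (fun c => (s.filter (fun x => f x = c)).card) _ (fun x hx => hc x hx)
  simpa using this

theorem color_trick {X C : Type} [Nonempty C] (bad : Finset X → X → C → Prop)
    (mono : ∀ A B x c, A ⊆ B → x ∈ A → bad B x c → bad A x c) (X0 : Finset X) :
    (∀ A ⊆ X0, A.Nonempty → ∃ x ∈ A, ∃ c, bad A x c) →
    ∃ col : X → C, ∀ A ⊆ X0, A.Nonempty → ∃ x ∈ A, bad A x (col x) := by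
  induction X0 using Finset.strongInduction with
  | H X0 ih =>
    intro h
    by_cases hne : X0.Nonempty
    · obtain ⟨x, hx, c, hc⟩ := h X0 (Finset.Subset.refl _) hne
      obtain ⟨col, hcol⟩ := ih (X0.erase x) (Finset.erase_ssubset hx)
        (fun A hA => h A (hA.trans (Finset.erase_subset _ _)))
      refine ⟨fun y => if y = x then c else col y, fun A hA hAn => ?_⟩
      by_cases hxA : x ∈ A
      · exact ⟨x, hxA, by simpa using mono A X0 x c hA hxA hc⟩
      · have hsub : A ⊆ X0.erase x := fun y hy =>
          Finset.mem_erase.2 ⟨fun h => hxA (h ▸ hy), hA hy⟩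
        obtain ⟨y, hy, hb⟩ := hcol A hsub hAn
        refine ⟨y, hy, ?_⟩
        have : y ≠ x := fun h => hxA (h ▸ hy)
        simpa [this] using hb
    · refine ⟨fun _ => Classical.arbitrary C, fun A hA hAn => ?_⟩
      exact absurd (hAn.mono hA) hne

theorem color_class {X C : Type} [Fintype C] [Nonempty C] (bad : Finset X → X → C → Prop)
    (mono : ∀ A B x c, A ⊆ B → x ∈ A → bad B x c → bad A x c) (X0 : Finset X)
    (h : ∀ A ⊆ X0, A.Nonempty → ∃ x ∈ A, ∃ c, bad A x c) :
    ∃ c, ∃ R ⊆ X0, X0.card ≤ Fintype.card C * R.card ∧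
      ∀ A ⊆ R, A.Nonempty → ∃ x ∈ A, bad A x c := by
  obtain ⟨col, hcol⟩ := color_trick bad mono X0 h
  obtain ⟨c, hc⟩ := pigeon X0 col
  refine ⟨c, _, Finset.filter_subset _ _, hc, fun A hA hAn => ?_⟩
  obtain ⟨x, hx, hb⟩ := hcol A (hA.trans (Finset.filter_subset _ _)) hAn
  have := (Finset.mem_filter.1 (hA hx)).2
  exact ⟨x, hx, this ▸ hb⟩

/-- Number of tuples in `A` agreeing with `e` on `J` and avoiding `W` off `J`. -/
noncomputable def cnt {ι : Type} (A : Finset (ι → ℕ)) (J : Finset ι) (W : Finset ℕ)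
    (e : ι → ℕ) : ℕ :=
  (A.filter fun e' => (∀ i ∈ J, e' i = e i) ∧ ∀ i, i ∉ J → e' i ∉ W).card

def GoodAt {ι : Type} (w : ℕ) (A : Finset (ι → ℕ)) (J : Finset ι) (L : ℝ) : Prop :=
  ∀ e ∈ A, ∀ W : Finset ℕ, W.card ≤ w → L ≤ (cnt A J W e : ℝ)

def Functional {ι : Type} (A : Finset (ι → ℕ)) (J : Finset ι) : Prop :=
  ∃ i, i ∉ J ∧ ∀ e ∈ A, ∀ e' ∈ A, (∀ j ∈ J, e j = e' j) → e i = e' i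

theorem cnt_mono {ι : Type} {A B : Finset (ι → ℕ)} (h : A ⊆ B) (J : Finset ι) (W : Finset ℕ)
    (e : ι → ℕ) : cnt A J W e ≤ cnt B J W e :=
  Finset.card_le_card (Finset.filter_subset_filter _ h)

theorem GoodAt.le {ι : Type} {w : ℕ} {A : Finset (ι → ℕ)} {J : Finset ι} {L L' : ℝ}
    (h : GoodAt w A J L) (hL : L' ≤ L) : GoodAt w A J L' :=
  fun e he W hW => hL.trans (h e he W hW)

theorem Functional.mono {ι : Type} {A B : Finset (ι → ℕ)} {J : Finset ι}
    (h : Functional B J) (hAB : A ⊆ B) : Functional A J := by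
  obtain ⟨i, hi, h⟩ := h
  exact ⟨i, hi, fun e he e' he' => h e (hAB he) e' (hAB he')⟩

/-- Number of tuples with values in `[n]` agreeing with `e` on `J`. -/
theorem card_agree_le {ι : Type} [Fintype ι] (n : ℕ) (A : Finset (ι → ℕ))
    (hA : ∀ e ∈ A, ∀ i, e i ∈ Finset.Icc 1 n) (J : Finset ι) (e : ι → ℕ)
    (h : ∀ e' ∈ A, ∀ i ∈ J, e' i = e i) :
    A.card ≤ n ^ (Fintype.card ι - J.card) := by
  have h1 : A ⊆ Fintype.piFinset (fun i => if i ∈ J then {e i} else Finset.Icc 1 n) := by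
    intro e' he'
    rw [Fintype.mem_piFinset]
    intro i
    by_cases hi : i ∈ J
    · simp [hi, h e' he' i hi]
    · simpa [hi] using hA e' he' i
  refine (Finset.card_le_card h1).trans ?_
  rw [Fintype.card_piFinset]
  have : ∀ i, (if i ∈ J then ({e i} : Finset ℕ) else Finset.Icc 1 n).card
      = if i ∈ J then 1 else n := by
    intro i; split_ifs <;> simp
  simp only [this]
  rw [Finset.prod_ite]
  simp only [Finset.prod_const_one, one_mul, Finset.prod_const]
  apply le_of_eq
  congr 1
  rw [Finset.filter_not, Finset.card_sdiff_of_subset (Finset.filter_subset _ _)]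
  simp

/-- Number of `J`-projections. -/
theorem card_proj_le {ι : Type} [Fintype ι] (n : ℕ) (A : Finset (ι → ℕ))
    (hA : ∀ e ∈ A, ∀ i, e i ∈ Finset.Icc 1 n) (J : Finset ι) :
    (A.image (fun e i => if i ∈ J then e i else 0)).card ≤ n ^ J.card := by
  have h1 : A.image (fun e i => if i ∈ J then e i else 0) ⊆
      Fintype.piFinset (fun i => if i ∈ J then Finset.Icc 1 n else {0}) := by
    intro e' he'
    obtain ⟨e, he, rfl⟩ := Finset.mem_image.1 he'
    rw [Fintype.mem_piFinset]
    intro i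
    by_cases hi : i ∈ J
    · simpa [hi] using hA e he i
    · simp [hi]
  refine (Finset.card_le_card h1).trans ?_
  rw [Fintype.card_piFinset]
  have : ∀ i, (if i ∈ J then Finset.Icc 1 n else ({0} : Finset ℕ)).card
      = if i ∈ J then n else 1 := by
    intro i; split_ifs <;> simp
  simp only [this]
  rw [Finset.prod_ite]
  simp

theorem exists_enum (w : ℕ) (W : Finset ℕ) (h : W.card ≤ w) :
    ∃ f : Fin w → ℕ, ∀ x ∈ W, ∃ s, f s = x := by
  refine ⟨fun s => W.toList.getD s 0, fun x hx => ?_⟩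
  obtain ⟨i, hi, hxi⟩ := List.getElem_of_mem (Finset.mem_toList.2 hx)
  refine ⟨⟨i, ?_⟩, ?_⟩
  · rw [Finset.length_toList] at hi; omega
  · simp [List.getD_eq_getElem?_getD, List.getElem?_eq_getElem hi, hxi]

theorem cnt_le_card {ι : Type} (A : Finset (ι → ℕ)) (J : Finset ι) (W : Finset ℕ)
    (e : ι → ℕ) : cnt A J W e ≤ A.card := by
  unfold cnt
  apply Finset.card_le_card
  apply Finset.filter_subset

/-! ### Homogeneous subfamilies (delta-system method) -/

theorem hom_step {ι : Type} [Fintype ι] [Nonempty ι] (w : ℕ) (hw : 1 ≤ w) (θ : ℝ) (hθ : 0 < θ)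
    (n : ℕ) (hn : 1 ≤ n) (M : ℝ) (hM : 0 < M) (A : Finset (ι → ℕ))
    (hA : ∀ e ∈ A, ∀ i, e i ∈ Finset.Icc 1 n) (hcard : θ * M ≤ A.card)
    (𝒰 : Finset (Finset ι)) (δ : ℝ) (hδ : δ = θ / (2 * Fintype.card (Finset ι))) :
    (∃ A' ⊆ A, A'.Nonempty ∧ ∀ e ∈ A', ∀ J : Finset ι, ∀ W : Finset ℕ, W.card ≤ w →
      (J ∉ 𝒰 → W = ∅) → δ * M / (n : ℝ) ^ J.card ≤ cnt A' J W e) ∨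
    ∃ J ∈ 𝒰, ∃ A' ⊆ A, δ / (Fintype.card ι * w) * M ≤ A'.card ∧ Functional A' J := by
  by_contra hcon
  push Not at hcon
  obtain ⟨hcon1, hcon2⟩ := hcon
  have hN : (0:ℝ) < Fintype.card (Finset ι) := by exact_mod_cast Fintype.card_pos
  have hδ0 : 0 < δ := by rw [hδ]; positivity
  have hnR : (0:ℝ) < n := by exact_mod_cast hn
  obtain ⟨J, R, hRA, hRcard, hR⟩ := color_class
    (fun (A' : Finset (ι → ℕ)) e (J : Finset ι) => ∃ W : Finset ℕ, W.card ≤ w ∧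
      (J ∉ 𝒰 → W = ∅) ∧ (cnt A' J W e : ℝ) < δ * M / (n : ℝ) ^ J.card)
    (by
      rintro A' B x J hAB - ⟨W, h1, h2, h3⟩
      refine ⟨W, h1, h2, lt_of_le_of_lt ?_ h3⟩
      exact_mod_cast cnt_mono hAB J W x) A
    (by
      intro A' hA' hne
      obtain ⟨e, he, J, W, h1, h2, h3⟩ := hcon1 A' hA' hne
      exact ⟨e, he, J, W, h1, h2, h3⟩)
  set L : ℝ := δ * M / (n : ℝ) ^ J.card with hL
  have hL0 : 0 < L := by positivity
  have hRbig : 2 * δ * M ≤ R.card := by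
    have h1 : (A.card : ℝ) ≤ Fintype.card (Finset ι) * R.card := by exact_mod_cast hRcard
    have h2 : 2 * δ * M * Fintype.card (Finset ι) = θ * M := by
      rw [hδ]; field_simp
    nlinarith
  set π : (ι → ℕ) → (ι → ℕ) := fun e i => if i ∈ J then e i else 0 with hπ
  have hπJ : ∀ e e' : ι → ℕ, π e = π e' → ∀ i ∈ J, e i = e' i := by
    intro e e' h i hi
    have := congrFun h i
    simpa [hπ, hi] using this
  have hT : ∀ T : ι → ℕ, ∃ W : Finset ℕ, W.card ≤ w ∧ (J ∉ 𝒰 → W = ∅) ∧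
      ((R.filter fun e => π e = T ∧ ∀ i, i ∉ J → e i ∉ W).card : ℝ) < L := by
    intro T
    by_cases hne : (R.filter fun e => π e = T).Nonempty
    · obtain ⟨e, he, W, h1, h2, h3⟩ := hR _ (Finset.filter_subset _ _) hne
      refine ⟨W, h1, h2, lt_of_le_of_lt ?_ h3⟩
      have heT := (Finset.mem_filter.1 he).2
      unfold cnt
      norm_cast
      apply Finset.card_le_card
      intro e' he'
      simp only [Finset.mem_filter] at he' ⊢
      exact ⟨⟨he'.1, he'.2.1⟩, fun i hi => hπJ _ _ (he'.2.1.trans heT.symm) i hi, he'.2.2⟩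
    · refine ⟨∅, by simp, fun _ => rfl, ?_⟩
      rw [Finset.not_nonempty_iff_eq_empty] at hne
      have : (R.filter fun e => π e = T ∧ ∀ i, i ∉ J → e i ∉ (∅ : Finset ℕ)) = ∅ := by
        rw [← Finset.subset_empty, ← hne]
        intro e he
        simp only [Finset.mem_filter] at he ⊢
        exact ⟨he.1, he.2.1⟩
      rw [this]; simpa using hL0
  choose Wf hW1 hW2 hW3 using hT
  set Rb := R.filter fun e => ∀ i, i ∉ J → e i ∉ Wf (π e) with hRb
  have hRbcard : (Rb.card : ℝ) ≤ δ * M := by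
    have h1 : Rb.card = ∑ T ∈ R.image π, (Rb.filter fun e => π e = T).card :=
      Finset.card_eq_sum_card_fiberwise (fun e he =>
        Finset.mem_coe.2 (Finset.mem_image_of_mem π (Finset.mem_filter.1 he).1))
    have h2 : (Rb.card : ℝ) ≤ ∑ T ∈ R.image π, L := by
      rw [h1]; push_cast
      apply Finset.sum_le_sum
      intro T _
      refine le_trans ?_ (hW3 T).le
      norm_cast
      apply Finset.card_le_card
      intro e he
      simp only [hRb, Finset.mem_filter] at he ⊢
      obtain ⟨⟨h1, h2⟩, h3⟩ := he
      exact ⟨h1, h3, h3 ▸ h2⟩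
    rw [Finset.sum_const, nsmul_eq_mul] at h2
    have h3 : ((R.image π).card : ℝ) ≤ (n : ℝ) ^ J.card := by
      exact_mod_cast card_proj_le n R (fun e he => hA e (hRA he)) J
    calc (Rb.card : ℝ) ≤ _ := h2
      _ ≤ (n : ℝ) ^ J.card * L := by gcongr
      _ = δ * M := by rw [hL]; field_simp
  have hδM : 0 < δ * M := by positivity
  by_cases hJ : J ∈ 𝒰
  · have hR' : δ * M ≤ (R \ Rb).card := by
      rw [Finset.card_sdiff_of_subset (Finset.filter_subset _ _), Nat.cast_sub
        (Finset.card_le_card (Finset.filter_subset _ _))]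
      linarith
    choose f hf using fun T => exists_enum w (Wf T) (hW1 T)
    have hcol : ∀ e : ι → ℕ, ∃ c : ι × Fin w, e ∈ R \ Rb → c.1 ∉ J ∧ f (π e) c.2 = e c.1 := by
      intro e
      by_cases he : e ∈ R \ Rb
      · have h1 : ∃ i, i ∉ J ∧ e i ∈ Wf (π e) := by
          by_contra hc
          push Not at hc
          rw [Finset.mem_sdiff] at he
          exact he.2 (Finset.mem_filter.2 ⟨he.1, hc⟩)
        obtain ⟨i, hi, hiW⟩ := h1
        obtain ⟨s, hs⟩ := hf _ _ hiW
        exact ⟨(i, s), fun _ => ⟨hi, hs⟩⟩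
      · exact ⟨(Classical.arbitrary ι, ⟨0, hw⟩), fun h => absurd h he⟩
    choose col hcol using hcol
    have : Nonempty (ι × Fin w) := ⟨(Classical.arbitrary ι, ⟨0, hw⟩)⟩
    obtain ⟨c, hc⟩ := pigeon (R \ Rb) col
    set R'' := (R \ Rb).filter fun e => col e = c with hR''
    have hkw : (0:ℝ) < Fintype.card ι * w := by
      have h1 : 0 < Fintype.card ι := Fintype.card_pos
      have h2 : 0 < w := hw
      positivity
    have hc' : ((R \ Rb).card : ℝ) ≤ Fintype.card ι * w * R''.card := by
      have : Fintype.card (ι × Fin w) = Fintype.card ι * w := by simp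
      rw [this] at hc
      have hc2 : (R \ Rb).card ≤ Fintype.card ι * w * R''.card := by convert hc
      exact_mod_cast hc2
    have hsize : δ / (Fintype.card ι * w) * M ≤ R''.card := by
      rw [div_mul_eq_mul_div, div_le_iff₀ hkw]; linarith
    have hne : R''.Nonempty := by
      rw [← Finset.card_pos]
      have : (0:ℝ) < R''.card := lt_of_lt_of_le (by positivity) hsize
      exact_mod_cast this
    refine hcon2 J hJ R'' ?_ hsize ⟨c.1, ?_, ?_⟩
    · exact (Finset.filter_subset _ _).trans (Finset.sdiff_subset.trans hRA)
    · obtain ⟨e, he⟩ := hne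
      have h := Finset.mem_filter.1 he
      have := (hcol e h.1).1
      rwa [h.2] at this
    · intro e he e' he' hagree
      have h := Finset.mem_filter.1 he
      have h' := Finset.mem_filter.1 he'
      have h1 := (hcol e h.1).2
      have h1' := (hcol e' h'.1).2
      rw [h.2] at h1
      rw [h'.2] at h1'
      rw [← h1, ← h1']
      have : π e = π e' := by
        funext i
        by_cases hi : i ∈ J
        · simp [hπ, hi, hagree i hi]
        · simp [hπ, hi]
      rw [this]
  · have : Rb = R := by
      rw [hRb]
      apply Finset.filter_true_of_mem
      intro e _ i _
      rw [hW2 _ hJ]; simp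
    rw [this] at hRbcard
    linarith

theorem hom_ind {ι : Type} [Fintype ι] [Nonempty ι] (w : ℕ) (hw : 1 ≤ w) (m : ℕ) :
    ∀ θ : ℝ, 0 < θ → ∃ δ : ℝ, 0 < δ ∧ ∀ (n : ℕ) (M : ℝ) (A : Finset (ι → ℕ))
      (𝒰 : Finset (Finset ι)), 1 ≤ n → 0 < M → (∀ e ∈ A, ∀ i, e i ∈ Finset.Icc 1 n) →
      θ * M ≤ A.card → 𝒰.card = m → (∀ J, J ∉ 𝒰 → Functional A J) →
      ∃ A' ⊆ A, A'.Nonempty ∧ (∀ J, ∀ e ∈ A', δ * M / (n : ℝ) ^ J.card ≤ cnt A' J ∅ e) ∧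
        ∀ J, GoodAt w A' J (δ * M / (n : ℝ) ^ J.card) ∨ Functional A' J := by
  induction m with
  | zero =>
    intro θ hθ
    have hN : (0:ℝ) < Fintype.card (Finset ι) := by exact_mod_cast Fintype.card_pos
    refine ⟨θ / (2 * Fintype.card (Finset ι)), by positivity, ?_⟩
    intro n M A 𝒰 hn hM hA hcard hU hF
    rcases hom_step w hw θ hθ n hn M hM A hA hcard 𝒰 _ rfl with h | ⟨J, hJ, -⟩
    · obtain ⟨A', hA', hne, h⟩ := h
      refine ⟨A', hA', hne, fun J e he => h e he J ∅ (by simp) (fun _ => rfl), fun J => ?_⟩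
      exact Or.inr ((hF J (by rw [Finset.card_eq_zero.1 hU]; simp)).mono hA')
    · rw [Finset.card_eq_zero.1 hU] at hJ; simp at hJ
  | succ m ih =>
    intro θ hθ
    have hN : (0:ℝ) < Fintype.card (Finset ι) := by exact_mod_cast Fintype.card_pos
    have hI : (0:ℝ) < Fintype.card ι := by exact_mod_cast Fintype.card_pos
    have hw' : (0:ℝ) < w := by exact_mod_cast hw
    set δ1 := θ / (2 * Fintype.card (Finset ι)) with hδ1
    have hδpos : 0 < δ1 := by positivity
    obtain ⟨δ2, hδ2, hrec⟩ := ih (δ1 / (Fintype.card ι * w)) (by positivity)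
    refine ⟨min δ1 δ2, lt_min hδpos hδ2, ?_⟩
    intro n M A 𝒰 hn hM hA hcard hU hF
    have hnR : (0:ℝ) < n := by exact_mod_cast hn
    have hle1 : ∀ J : Finset ι, min δ1 δ2 * M / (n : ℝ) ^ J.card ≤ δ1 * M / (n : ℝ) ^ J.card := by
      intro J; gcongr; exact min_le_left _ _
    have hle2 : ∀ J : Finset ι, min δ1 δ2 * M / (n : ℝ) ^ J.card ≤ δ2 * M / (n : ℝ) ^ J.card := by
      intro J; gcongr; exact min_le_right _ _
    rcases hom_step w hw θ hθ n hn M hM A hA hcard 𝒰 _ hδ1 with h | ⟨J, hJ, A1, hA1, hc1, hf1⟩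
    · obtain ⟨A', hA', hne, h⟩ := h
      refine ⟨A', hA', hne, fun J e he => (hle1 J).trans (h e he J ∅ (by simp) (fun _ => rfl)),
        fun J => ?_⟩
      by_cases hJ : J ∈ 𝒰
      · exact Or.inl fun e he W hW => (hle1 J).trans (h e he J W hW (fun h => absurd hJ h))
      · exact Or.inr ((hF J hJ).mono hA')
    · obtain ⟨A', hA', hne, h1, h2⟩ := hrec n M A1 (𝒰.erase J) hn hM
        (fun e he => hA e (hA1 he)) hc1 (by rw [Finset.card_erase_of_mem hJ, hU]; rfl)
        (by
          intro J' hJ'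
          by_cases h : J' = J
          · exact h ▸ hf1
          · exact (hF J' (fun hm => hJ' (Finset.mem_erase.2 ⟨h, hm⟩))).mono hA1)
      refine ⟨A', hA'.trans hA1, hne, fun J e he => (hle2 J).trans (h1 J e he), fun J => ?_⟩
      exact (h2 J).imp (fun h => h.le (hle2 J)) id

theorem hom {ι : Type} [Fintype ι] [Nonempty ι] (w : ℕ) (hw : 1 ≤ w) (θ : ℝ) (hθ : 0 < θ) :
    ∃ δ : ℝ, 0 < δ ∧ ∀ (n : ℕ) (M : ℝ) (A : Finset (ι → ℕ)),
      1 ≤ n → 0 < M → (∀ e ∈ A, ∀ i, e i ∈ Finset.Icc 1 n) → θ * M ≤ A.card →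
      ∃ A' ⊆ A, A'.Nonempty ∧ (∀ J, ∀ e ∈ A', δ * M / (n : ℝ) ^ J.card ≤ cnt A' J ∅ e) ∧
        ∀ J, GoodAt w A' J (δ * M / (n : ℝ) ^ J.card) ∨ Functional A' J := by
  obtain ⟨δ, hδ, h⟩ := hom_ind (ι := ι) w hw (Finset.univ : Finset (Finset ι)).card θ hθ
  exact ⟨δ, hδ, fun n M A hn hM hA hc => h n M A Finset.univ hn hM hA hc rfl
    (fun J hJ => absurd (Finset.mem_univ J) hJ)⟩

/-! ### The type 1 / type 2 dichotomy -/

theorem famTypes {ι : Type} [Fintype ι] (hc : 2 ≤ Fintype.card ι) (𝒥 : Finset ι → Prop)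
    (hint : ∀ J₁ J₂, 𝒥 J₁ → 𝒥 J₂ → 𝒥 (J₁ ∩ J₂))
    (hcov : ∀ J : Finset ι, J.card + 2 ≤ Fintype.card ι → ∃ J', J ⊆ J' ∧ J' ≠ Finset.univ ∧ 𝒥 J') :
    (∃ p q, p ≠ q ∧ ∀ S : Finset ι, p ∉ S → q ∉ S → 𝒥 S) ∨
    ∃ x, (∀ S : Finset ι, x ∈ S → S ≠ Finset.univ → 𝒥 S) ∧ ¬ 𝒥 ({x}ᶜ) := by
  have cover : ∀ i j : ι, i ≠ j → 𝒥 ({i, j}ᶜ) ∨ 𝒥 ({i}ᶜ) ∨ 𝒥 ({j}ᶜ) := by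
    intro i j hij
    obtain ⟨J', h1, h2, h3⟩ := hcov ({i, j}ᶜ) (by
      rw [Finset.card_compl, Finset.card_pair hij]; omega)
    have hmem : ∀ v, v ≠ i → v ≠ j → v ∈ J' := fun v hi hj => h1 (by simp [hi, hj])
    by_cases hi : i ∈ J'
    · right; right
      have : J' = {j}ᶜ := by
        ext v
        simp only [Finset.mem_compl, Finset.mem_singleton]
        constructor
        · rintro hv rfl
          apply h2
          rw [Finset.eq_univ_iff_forall]
          intro u
          by_cases hu : u = i
          · exact hu ▸ hi
          · by_cases hu' : u = v
            · exact hu' ▸ hv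
            · exact hmem u hu hu'
        · intro hv
          by_cases hv' : v = i
          · exact hv' ▸ hi
          · exact hmem v hv' hv
      exact this ▸ h3
    · by_cases hj : j ∈ J'
      · right; left
        have : J' = {i}ᶜ := by
          ext v
          simp only [Finset.mem_compl, Finset.mem_singleton]
          constructor
          · rintro hv rfl
            exact hi hv
          · intro hv
            by_cases hv' : v = j
            · exact hv' ▸ hj
            · exact hmem v hv hv'
        exact this ▸ h3
      · left
        have : J' = {i, j}ᶜ := by
          ext v
          simp only [Finset.mem_compl, Finset.mem_singleton, Finset.mem_insert]
          constructor
          · rintro hv (rfl | rfl)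
            · exact hi hv
            · exact hj hv
          · intro hv
            push Not at hv
            exact hmem v hv.1 hv.2
        exact this ▸ h3
  -- intersections of complements
  have build : ∀ R₀ : Finset ι, 𝒥 (R₀ᶜ) → (∀ r, r ∉ R₀ → 𝒥 ((insert r R₀)ᶜ) ∨ 𝒥 ({r}ᶜ)) →
      ∀ S : Finset ι, Disjoint R₀ S → 𝒥 S := by
    intro R₀ h0 hr S hS
    have : ∀ R : Finset ι, 𝒥 ((R₀ ∪ R)ᶜ) := by
      intro R
      induction R using Finset.induction_on with
      | empty => simpa using h0
      | insert r R _ ih =>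
        by_cases hrm : r ∈ R₀
        · have : R₀ ∪ insert r R = R₀ ∪ R := by
            ext v; simp only [Finset.mem_union, Finset.mem_insert]
            constructor
            · rintro (h | rfl | h)
              · exact Or.inl h
              · exact Or.inl hrm
              · exact Or.inr h
            · rintro (h | h)
              · exact Or.inl h
              · exact Or.inr (Or.inr h)
          rw [this]; exact ih
        · rcases hr r hrm with h | h
          · have h' := hint _ _ ih h
            convert h' using 1
            ext v; simp only [Finset.mem_union, Finset.mem_insert, Finset.mem_compl,
              Finset.mem_inter]; tauto
          · have h' := hint _ _ ih h
            convert h' using 1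
            ext v; simp only [Finset.mem_union, Finset.mem_insert, Finset.mem_compl,
              Finset.mem_inter, Finset.mem_singleton]; tauto
    have h2 := this (Sᶜ)
    convert h2 using 1
    ext v
    simp only [Finset.mem_union, Finset.mem_compl]
    constructor
    · intro hv h
      rcases h with h | h
      · exact (Finset.disjoint_left.1 hS h) hv
      · exact h hv
    · intro h
      by_contra hv
      exact h (Or.inr hv)
  by_cases hall : ∀ i, 𝒥 ({i}ᶜ)
  · left
    have h1 : 1 < Fintype.card ι := hc
    obtain ⟨p, q, hpq⟩ := Fintype.exists_pair_of_one_lt_card h1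
    refine ⟨p, q, hpq, fun S hp hq => ?_⟩
    exact build {p} (hall p) (fun r _ => Or.inr (hall r)) S (by simpa using hp)
  · push Not at hall
    obtain ⟨x, hx⟩ := hall
    by_cases hpres : ∃ p, p ≠ x ∧ 𝒥 ({p, x}ᶜ)
    · left
      obtain ⟨p, hpx, hp⟩ := hpres
      refine ⟨p, x, hpx, fun S hpS hxS => ?_⟩
      refine build {p, x} hp ?_ S ?_
      · intro r hr
        simp only [Finset.mem_insert, Finset.mem_singleton, not_or] at hr
        rcases cover x r (Ne.symm hr.2) with h | h | h
        · left
          have h' := hint _ _ hp h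
          convert h' using 1
          ext v; simp only [Finset.mem_insert, Finset.mem_compl,
              Finset.mem_inter, Finset.mem_singleton]; tauto
        · exact absurd h hx
        · exact Or.inr h
      · rw [Finset.disjoint_left]
        intro v hv
        simp only [Finset.mem_insert, Finset.mem_singleton] at hv
        rcases hv with rfl | rfl <;> assumption
    · right
      push Not at hpres
      have hI : ∀ p, p ≠ x → 𝒥 ({p}ᶜ) := by
        intro p hp
        rcases cover p x hp with h | h | h
        · exact absurd h (hpres p hp)
        · exact h
        · exact absurd h hx
      refine ⟨x, fun S hxS hS => ?_, hx⟩
      have : ∃ p, p ∉ S := by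
        by_contra hc
        push Not at hc
        exact hS (Finset.eq_univ_iff_forall.2 hc)
      obtain ⟨p, hp⟩ := this
      have hsmall : ∀ R : Finset ι, x ∉ R → R.Nonempty → 𝒥 (Rᶜ) := by
        intro R
        induction R using Finset.induction_on with
        | empty => intro _ h; simp at h
        | insert r R _ ih =>
          intro hxR _
          have hrx : r ≠ x := fun h => hxR (by simp [h])
          by_cases hne : R.Nonempty
          · have h1 := ih (fun h => hxR (by simp [h])) hne
            have h' := hint _ _ h1 (hI r hrx)
            convert h' using 1
            ext v; simp only [Finset.mem_insert, Finset.mem_compl,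
              Finset.mem_inter, Finset.mem_singleton]; tauto
          · rw [Finset.not_nonempty_iff_eq_empty] at hne
            rw [hne]; simpa using hI r hrx
      have := hsmall (Sᶜ) (by simpa using hxS) ⟨p, by simpa using hp⟩
      simpa using this

theorem dich {ι : Type} [Fintype ι] (hc : 2 ≤ Fintype.card ι) (w : ℕ) (hw : 1 ≤ w)
    (θ κ : ℝ) (hθ : 0 < θ) (hκ : 0 < κ) :
    ∃ δ : ℝ, 0 < δ ∧ ∃ n₀ : ℕ, ∀ n ≥ n₀, ∀ (M : ℝ) (A : Finset (ι → ℕ)),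
      κ * (n : ℝ) ^ (Fintype.card ι - 1) ≤ M → (∀ e ∈ A, ∀ i, e i ∈ Finset.Icc 1 n) →
      θ * M ≤ A.card →
      ∃ A' ⊆ A, A'.Nonempty ∧ δ * M ≤ A'.card ∧
        ((∃ p q, p ≠ q ∧ ∀ S : Finset ι, p ∉ S → q ∉ S →
            GoodAt w A' S (δ * M / (n : ℝ) ^ S.card)) ∨
         ∃ x, (∀ S : Finset ι, x ∈ S → S ≠ Finset.univ →
            GoodAt w A' S (δ * M / (n : ℝ) ^ S.card)) ∧
            ∀ e ∈ A', ∀ e' ∈ A', (∀ i, i ≠ x → e i = e' i) → e = e') := by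
  have hne : Nonempty ι := by
    rw [← Fintype.card_pos_iff]; omega
  obtain ⟨δ, hδ, hhom⟩ := hom (ι := ι) w hw θ hθ
  obtain ⟨n₁, hn₁⟩ := exists_nat_gt (1 / (δ * κ))
  refine ⟨δ, hδ, n₁ + 1, fun n hn M A hM hA hcard => ?_⟩
  have hn1 : 1 ≤ n := by omega
  have hnR : (0:ℝ) < n := by exact_mod_cast hn1
  have hM0 : 0 < M := lt_of_lt_of_le (by positivity) hM
  have hbig : 1 < δ * κ * n := by
    have : (n₁ : ℝ) ≤ n := by exact_mod_cast (by omega : n₁ ≤ n)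
    have h2 : 1 / (δ * κ) < n := lt_of_lt_of_le hn₁ this
    rw [div_lt_iff₀ (by positivity)] at h2
    linarith
  obtain ⟨A', hA', hne', hdeg, hgf⟩ := hhom n M A hn1 hM0 hA hcard
  have hLpos : ∀ J : Finset ι, 0 < δ * M / (n : ℝ) ^ J.card := fun J => by positivity
  have hcardA : δ * M ≤ A'.card := by
    obtain ⟨e, he⟩ := hne'
    have := hdeg ∅ e he
    refine le_trans (by simpa using this) ?_
    exact_mod_cast cnt_le_card A' ∅ ∅ e
  refine ⟨A', hA', hne', hcardA, ?_⟩
  have hint : ∀ J₁ J₂ : Finset ι, GoodAt w A' (J₁) (δ * M / (n : ℝ) ^ (J₁).card) → GoodAt w A' (J₂) (δ * M / (n : ℝ) ^ (J₂).card) →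
      GoodAt w A' (J₁ ∩ J₂) (δ * M / (n : ℝ) ^ (J₁ ∩ J₂).card) := by
    intro J₁ J₂ h1 h2
    rcases hgf (J₁ ∩ J₂) with h | ⟨i, hi, hf⟩
    · exact h
    · exfalso
      obtain ⟨e, he⟩ := hne'
      have key : ∀ J : Finset ι, J₁ ∩ J₂ ⊆ J → i ∉ J →
          GoodAt w A' J (δ * M / (n : ℝ) ^ J.card) → False := by
        intro J hJ hiJ hg
        have h := hg e he {e i} (by simpa using hw)
        have hpos : (0:ℝ) < cnt A' J {e i} e := lt_of_lt_of_le (hLpos J) h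
        have hpos' : 0 < cnt A' J {e i} e := by exact_mod_cast hpos
        unfold cnt at hpos'
        obtain ⟨e', he'⟩ := Finset.card_pos.1 hpos'
        simp only [Finset.mem_filter, Finset.mem_singleton] at he'
        exact he'.2.2 i hiJ (hf e' he'.1 e he (fun j hj => he'.2.1 j (hJ hj)))
      by_cases hi1 : i ∈ J₁
      · have hi2 : i ∉ J₂ := fun h => hi (Finset.mem_inter.2 ⟨hi1, h⟩)
        exact key J₂ Finset.inter_subset_right hi2 h2
      · exact key J₁ Finset.inter_subset_left hi1 h1
  have hcov : ∀ J : Finset ι, J.card + 2 ≤ Fintype.card ι → ∃ J', J ⊆ J' ∧ J' ≠ Finset.univ ∧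
      GoodAt w A' (J') (δ * M / (n : ℝ) ^ (J').card) := by
    intro J hJ
    by_contra hcon
    push Not at hcon
    have hfun : ∀ m : ℕ, ∀ J' : Finset ι, J ⊆ J' → (J'ᶜ).card = m →
        ∀ e ∈ A', ∀ e' ∈ A', (∀ j ∈ J', e j = e' j) → e = e' := by
      intro m
      induction m with
      | zero =>
        intro J' _ h0 e _ e' _ hag
        funext j
        apply hag
        have : J'ᶜ = ∅ := Finset.card_eq_zero.1 h0
        by_contra hj
        have : j ∈ J'ᶜ := by simpa using hj
        simp_all
      | succ m ih =>
        intro J' hJJ h0 e he e' he' hag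
        have hnu : J' ≠ Finset.univ := by
          rintro rfl; simp at h0
        rcases hgf J' with h | ⟨i, hi, hf⟩
        · exact absurd h (hcon J' hJJ hnu)
        · refine ih (insert i J') (hJJ.trans (Finset.subset_insert _ _)) ?_ e he e' he' ?_
          · rw [Finset.card_compl, Finset.card_insert_of_notMem hi]
            rw [Finset.card_compl] at h0
            omega
          · intro j hj
            rcases Finset.mem_insert.1 hj with rfl | hj
            · exact hf e he e' he' hag
            · exact hag j hj
    obtain ⟨e, he⟩ := hne'
    have h1 := hdeg J e he
    have h2 : cnt A' J ∅ e ≤ 1 := by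
      unfold cnt
      rw [Finset.card_le_one]
      intro a ha b hb
      simp only [Finset.mem_filter] at ha hb
      exact hfun _ J (Finset.Subset.refl _) rfl a ha.1 b hb.1
        (fun j hj => (ha.2.1 j hj).trans (hb.2.1 j hj).symm)
    have h3 : δ * M / (n : ℝ) ^ J.card ≤ 1 := h1.trans (by exact_mod_cast h2)
    rw [div_le_one (by positivity)] at h3
    have h4 : (n : ℝ) ^ (Fintype.card ι - 1) = (n : ℝ) ^ (Fintype.card ι - 1 - J.card) *
        (n : ℝ) ^ J.card := by
      rw [← pow_add]; congr 1; omega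
    have h5 : (n : ℝ) ≤ (n : ℝ) ^ (Fintype.card ι - 1 - J.card) := by
      apply le_self_pow₀
      · exact_mod_cast hn1
      · omega
    have h6 : δ * κ * n * (n : ℝ) ^ J.card ≤ δ * M := by
      calc δ * κ * n * (n : ℝ) ^ J.card = δ * (κ * (n * (n : ℝ) ^ J.card)) := by ring
        _ ≤ δ * (κ * ((n : ℝ) ^ (Fintype.card ι - 1 - J.card) * (n : ℝ) ^ J.card)) := by gcongr
        _ = δ * (κ * (n : ℝ) ^ (Fintype.card ι - 1)) := by rw [← h4]
        _ ≤ δ * M := by gcongr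
    have h7 : (0:ℝ) < (n : ℝ) ^ J.card := by positivity
    nlinarith
  rcases famTypes hc (fun J => GoodAt w A' J (δ * M / (n : ℝ) ^ J.card)) hint hcov with h | h
  · exact Or.inl h
  · obtain ⟨x, hx1, hx2⟩ := h
    refine Or.inr ⟨x, hx1, ?_⟩
    rcases hgf ({x}ᶜ) with h | ⟨i, hi, hf⟩
    · exact absurd h hx2
    · intro e he e' he' hag
      have hix : i = x := by simpa using hi
      funext j
      by_cases hj : j = x
      · rw [hj, ← hix]
        exact hf e he e' he' (fun j hj => hag j (by simpa using hj))
      · exact hag j hj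

/-! ### Embedding hypertrees -/

theorem mem_vertexSet {α : Type} [DecidableEq α] {H : Finset (Finset α)} {v : α} :
    v ∈ vertexSet H ↔ ∃ E ∈ H, v ∈ E := by
  unfold vertexSet
  simp [Finset.mem_sup]

theorem vertexSet_mono {α : Type} [DecidableEq α] {H H' : Finset (Finset α)} (h : H ⊆ H') :
    vertexSet H ⊆ vertexSet H' := by
  intro v hv
  obtain ⟨E, hE, hv⟩ := mem_vertexSet.1 hv
  exact mem_vertexSet.2 ⟨E, h hE, hv⟩

theorem embed_abstract {α : Type} [DecidableEq α] (H0 : Finset (Finset α))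
    (F : Finset (Finset ℕ)) (Adm : Finset (Finset ℕ) → Prop)
    (Q : Finset α → (α → ℕ) → Prop)
    (Qcongr : ∀ E φ φ', (∀ v ∈ E, φ v = φ' v) → Q E φ → Q E φ')
    (base : ∀ E ∈ H0, ∃ φ : α → ℕ, Set.InjOn φ ↑E ∧ E.image φ ∈ F ∧ Q E φ ∧ Adm {E.image φ})
    (ext : ∀ H' ⊆ H0, ∀ E ∈ H0, E ∉ H' → ∀ P ∈ H', E ∩ vertexSet H' = E ∩ P →
      ∀ φ : α → ℕ, Set.InjOn φ ↑(vertexSet H') → (∀ E ∈ H', Q E φ) →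
      Adm (H'.image fun E => E.image φ) →
      ∃ φ' : α → ℕ, (∀ v ∈ E ∩ P, φ' v = φ v) ∧ Set.InjOn φ' ↑E ∧
        (∀ v ∈ E, v ∉ P → φ' v ∉ (vertexSet H').image φ) ∧ E.image φ' ∈ F ∧ Q E φ' ∧
        Adm (insert (E.image φ') (H'.image fun E => E.image φ)))
    (H : Finset (Finset α)) (hH : IsHypertree H) : H ⊆ H0 →
    ∃ φ : α → ℕ, Set.InjOn φ ↑(vertexSet H) ∧ (∀ E ∈ H, E.image φ ∈ F) ∧ (∀ E ∈ H, Q E φ) ∧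
      Adm (H.image fun E => E.image φ) := by
  induction hH with
  | single E =>
    intro hsub
    obtain ⟨φ, h1, h2, h3, h4⟩ := base E (hsub (by simp))
    refine ⟨φ, ?_, ?_, ?_, ?_⟩
    · simpa [vertexSet] using h1
    · simpa using h2
    · simpa using h3
    · simpa using h4
  | @grow H' E P hH' hE hP hint ih =>
    intro hsub
    have hsub' : H' ⊆ H0 := (Finset.subset_insert _ _).trans hsub
    obtain ⟨φ, h1, h2, h3, h4⟩ := ih hsub'
    obtain ⟨φ', g1, g2, g3, g4, g5, g6⟩ := ext H' hsub' E (hsub (by simp)) hE P hP hint φ h1 h3 h4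
    have hEP : ∀ v ∈ E, v ∈ vertexSet H' → v ∈ P := by
      intro v hv hv'
      have : v ∈ E ∩ P := hint ▸ Finset.mem_inter.2 ⟨hv, hv'⟩
      exact (Finset.mem_inter.1 this).2
    set χ : α → ℕ := fun v => if v ∈ vertexSet H' then φ v else φ' v with hχ
    have hχE : ∀ v ∈ E, φ' v = χ v := by
      intro v hv
      by_cases hv' : v ∈ vertexSet H'
      · simp only [hχ, hv', if_true]
        exact g1 v (Finset.mem_inter.2 ⟨hv, hEP v hv hv'⟩)
      · simp only [hχ, hv', if_false]
    have hχH : ∀ v ∈ vertexSet H', φ v = χ v := by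
      intro v hv'
      simp only [hχ, hv', if_true]
    have hχH2 : ∀ E' ∈ H', ∀ v ∈ E', φ v = χ v := fun E' hE' v hv =>
      hχH v (mem_vertexSet.2 ⟨E', hE', hv⟩)
    have imE : E.image χ = E.image φ' := Finset.image_congr (fun v hv => (hχE v hv).symm)
    have imH : ∀ E' ∈ H', E'.image χ = E'.image φ := fun E' hE' =>
      Finset.image_congr (fun v hv => (hχH2 E' hE' v hv).symm)
    refine ⟨χ, ?_, ?_, ?_, ?_⟩
    · have cross : ∀ u ∈ vertexSet H', ∀ v ∈ E, χ u = χ v → u = v := by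
        intro u hu v hv huv
        by_cases hv' : v ∈ vertexSet H'
        · rw [← hχH u hu, ← hχH v hv'] at huv
          exact h1 hu hv' huv
        · exfalso
          have hvP : v ∉ P := fun h => hv' (mem_vertexSet.2 ⟨P, hP, h⟩)
          apply g3 v hv hvP
          rw [hχE v hv, ← huv, ← hχH u hu]
          exact Finset.mem_image_of_mem _ hu
      have hcase : ∀ u ∈ vertexSet (insert E H'), u ∈ E ∨ u ∈ vertexSet H' := by
        intro u hu
        obtain ⟨E', hE', hu2⟩ := mem_vertexSet.1 hu
        rcases Finset.mem_insert.1 hE' with rfl | hE'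
        · exact Or.inl hu2
        · exact Or.inr (mem_vertexSet.2 ⟨E', hE', hu2⟩)
      intro u hu v hv huv
      rcases hcase u hu with hu' | hu' <;> rcases hcase v hv with hv' | hv'
      · rw [← hχE u hu', ← hχE v hv'] at huv
        exact g2 hu' hv' huv
      · exact (cross v hv' u hu' huv.symm).symm
      · exact cross u hu' v hv' huv
      · rw [← hχH u hu', ← hχH v hv'] at huv
        exact h1 hu' hv' huv
    · intro E' hE'
      rcases Finset.mem_insert.1 hE' with rfl | hE'
      · rw [imE]; exact g4
      · rw [imH E' hE']; exact h2 E' hE'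
    · intro E' hE'
      rcases Finset.mem_insert.1 hE' with rfl | hE'
      · exact Qcongr _ _ _ hχE g5
      · exact Qcongr _ _ _ (hχH2 E' hE') (h3 E' hE')
    · rw [Finset.image_insert, imE]
      have : (H'.image fun E => E.image χ) = H'.image fun E => E.image φ :=
        Finset.image_congr (fun E' hE' => imH E' hE')
      rw [this]; exact g6

theorem ext_inj {α ι : Type} [DecidableEq α] (f : α → ι) (s t : Finset α) (hst : s ⊆ t)
    (C : Finset ι) (hm : ∀ v ∈ s, f v ∈ C) (hi : Set.InjOn f ↑s) (hc : t.card ≤ C.card) :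
    ∃ g : α → ι, (∀ v ∈ s, g v = f v) ∧ Set.InjOn g ↑t ∧ ∀ v ∈ t, g v ∈ C := by
  have key : ∀ u : Finset α, s ∪ u ⊆ t →
      ∃ g : α → ι, (∀ v ∈ s, g v = f v) ∧ Set.InjOn g ↑(s ∪ u) ∧ ∀ v ∈ s ∪ u, g v ∈ C := by
    intro u
    induction u using Finset.induction_on with
    | empty => intro _; exact ⟨f, fun _ _ => rfl, by simpa using hi, by simpa using hm⟩
    | insert a u _ ih =>
      intro hsub
      have hsub' : s ∪ u ⊆ t := fun v hv => hsub (by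
        simp only [Finset.mem_union, Finset.mem_insert] at hv ⊢; tauto)
      obtain ⟨g, h1, h2, h3⟩ := ih hsub'
      by_cases ha : a ∈ s ∪ u
      · have : s ∪ insert a u = s ∪ u := by
          rw [Finset.union_insert, Finset.insert_eq_of_mem ha]
        rw [this]; exact ⟨g, h1, h2, h3⟩
      · have hlt : ((s ∪ u).image g).card < C.card := by
          refine lt_of_le_of_lt Finset.card_image_le (lt_of_lt_of_le ?_ hc)
          apply Finset.card_lt_card
          refine ⟨hsub', fun h => ha (h (hsub (by simp)))⟩
        obtain ⟨c, hcC, hcn⟩ := Finset.exists_mem_notMem_of_card_lt_card hlt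
        have hne : ∀ v ∈ s ∪ u, v ≠ a := fun v hv h => ha (h ▸ hv)
        have hne' : ∀ v ∈ s ∪ u, g v ≠ c := fun v hv h =>
          hcn (h ▸ Finset.mem_image_of_mem g hv)
        refine ⟨fun v => if v = a then c else g v, ?_, ?_, ?_⟩
        · intro v hv
          have := hne v (Finset.mem_union_left _ hv)
          simp [this, h1 v hv]
        · rw [Finset.union_insert]
          intro x hx y hy hxy
          rw [Finset.mem_coe, Finset.mem_insert] at hx hy
          rcases hx with rfl | hx <;> rcases hy with rfl | hy
          · rfl
          · simp only [hne y hy, if_true, if_false] at hxy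
            exact absurd hxy.symm (hne' y hy)
          · simp only [hne x hx, if_true, if_false] at hxy
            exact absurd hxy (hne' x hx)
          · simp only [hne x hx, hne y hy, if_false] at hxy
            exact h2 hx hy hxy
        · rw [Finset.union_insert]
          intro v hv
          rcases Finset.mem_insert.1 hv with rfl | hv
          · simpa using hcC
          · simpa [hne v hv] using h3 v hv
  obtain ⟨g, h1, h2, h3⟩ := key t (Finset.union_subset hst subset_rfl)
  rw [Finset.union_eq_right.2 hst] at h2 h3
  exact ⟨g, h1, h2, h3⟩

theorem hyper_col {α ι : Type} [DecidableEq α] [Nonempty ι] (H0 : Finset (Finset α))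
    (R : α → Prop) (C : Finset ι) (hc : ∀ E ∈ H0, (E.filter R).card ≤ C.card)
    (H : Finset (Finset α)) (hH : IsHypertree H) : H ⊆ H0 →
    ∃ ψ : α → ι, ∀ E ∈ H, Set.InjOn ψ ↑(E.filter R) ∧ ∀ v ∈ E, R v → ψ v ∈ C := by
  induction hH with
  | single E =>
    intro hsub
    obtain ⟨g, -, h2, h3⟩ := ext_inj (fun _ => Classical.arbitrary ι) ∅ (E.filter R) (by simp) C
      (by simp) (by simp) (hc E (hsub (by simp)))
    refine ⟨g, ?_⟩
    intro E' hE'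
    rw [Finset.mem_singleton] at hE'
    subst hE'
    exact ⟨h2, fun v hv hr => h3 v (Finset.mem_filter.2 ⟨hv, hr⟩)⟩
  | @grow H' E P hH' hE hP hint ih =>
    intro hsub
    have hsub' : H' ⊆ H0 := (Finset.subset_insert _ _).trans hsub
    obtain ⟨ψ, hψ⟩ := ih hsub'
    have hEP : ∀ v ∈ E, v ∈ vertexSet H' → v ∈ P := by
      intro v hv hv'
      have : v ∈ E ∩ P := hint ▸ Finset.mem_inter.2 ⟨hv, hv'⟩
      exact (Finset.mem_inter.1 this).2
    have hin : ∀ v ∈ (E ∩ P).filter R, v ∈ P.filter R := by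
      intro v hv
      simp only [Finset.mem_filter, Finset.mem_inter] at hv ⊢
      exact ⟨hv.1.2, hv.2⟩
    obtain ⟨g, h1, h2, h3⟩ := ext_inj ψ ((E ∩ P).filter R) (E.filter R)
      (Finset.filter_subset_filter _ Finset.inter_subset_left) C
      (fun v hv => (hψ P hP).2 v (Finset.mem_filter.1 (hin v hv)).1 (Finset.mem_filter.1 hv).2)
      ((hψ P hP).1.mono (fun v hv => hin v hv)) (hc E (hsub (by simp)))
    set χ : α → ι := fun v => if v ∈ vertexSet H' then ψ v else g v with hχ
    have hχE : ∀ v ∈ E, R v → χ v = g v := by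
      intro v hv hr
      by_cases hv' : v ∈ vertexSet H'
      · simp only [hχ, hv', if_true]
        exact (h1 v (Finset.mem_filter.2 ⟨Finset.mem_inter.2 ⟨hv, hEP v hv hv'⟩, hr⟩)).symm
      · simp only [hχ, hv', if_false]
    have hχH : ∀ E' ∈ H', ∀ v ∈ E', χ v = ψ v := by
      intro E' hE' v hv
      have : v ∈ vertexSet H' := mem_vertexSet.2 ⟨E', hE', hv⟩
      simp only [hχ, this, if_true]
    refine ⟨χ, ?_⟩
    intro E' hE'
    rcases Finset.mem_insert.1 hE' with rfl | hE'
    · constructor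
      · intro x hx y hy hxy
        have hx' := Finset.mem_filter.1 hx
        have hy' := Finset.mem_filter.1 hy
        rw [hχE x hx'.1 hx'.2, hχE y hy'.1 hy'.2] at hxy
        exact h2 hx hy hxy
      · intro v hv hr
        rw [hχE v hv hr]; exact h3 v (Finset.mem_filter.2 ⟨hv, hr⟩)
    · constructor
      · intro x hx y hy hxy
        have hx' := Finset.mem_filter.1 hx
        have hy' := Finset.mem_filter.1 hy
        rw [hχH E' hE' x hx'.1, hχH E' hE' y hy'.1] at hxy
        exact (hψ E' hE').1 hx hy hxy
      · intro v hv hr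
        rw [hχH E' hE' v hv]; exact (hψ E' hE').2 v hv hr

theorem pick {m k : ℕ} (Us : Finset (Fin m → ℕ)) (g : (Fin m → ℕ) → Finset ℕ)
    (hg : ∀ u ∈ Us, (∀ i, u i ∈ g u) ∧ (g u).card = k) (Bd : Finset (Finset ℕ))
    (h : Bd.card * k ^ m < Us.card) : ∃ u ∈ Us, g u ∉ Bd := by
  by_contra hcon
  push Not at hcon
  have := Finset.card_le_mul_card_image_of_maps_to (s := Us) (t := Bd) (f := g) hcon (k ^ m) (by
    intro b hb
    by_cases hne : (Us.filter fun u => g u = b).Nonempty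
    · obtain ⟨u0, hu0⟩ := hne
      have hu0' := Finset.mem_filter.1 hu0
      have hbk : b.card = k := hu0'.2 ▸ (hg u0 hu0'.1).2
      have hsub : (Us.filter fun u => g u = b) ⊆ Fintype.piFinset (fun _ => b) := by
        intro u hu
        have hu' := Finset.mem_filter.1 hu
        rw [Fintype.mem_piFinset]
        intro i
        exact hu'.2 ▸ (hg u hu'.1).1 i
      refine (Finset.card_le_card hsub).trans ?_
      rw [Fintype.card_piFinset]; simp [hbk]
    · rw [Finset.not_nonempty_iff_eq_empty] at hne
      rw [hne]; simp)
  rw [mul_comm] at this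
  omega

theorem image_comp_univ {α : Type} [DecidableEq α] {k : ℕ} (E : Finset α) (ψ : α → Fin k)
    (hE : E.card = k) (hi : Set.InjOn ψ ↑E) (u : Fin k → ℕ) :
    (E.image fun v => u (ψ v)) = Finset.univ.image u := by
  have h1 : E.image ψ = Finset.univ := by
    apply Finset.eq_univ_of_card
    rw [Finset.card_image_of_injOn hi, hE, Fintype.card_fin]
  rw [← h1, Finset.image_image]
  rfl

theorem vdeg_ne_one {α : Type} [DecidableEq α] {H : Finset (Finset α)} {E P : Finset α}
    (hE : E ∈ H) (hP : P ∈ H) (hne : E ≠ P) {v : α} (hv : v ∈ E) (hv' : v ∈ P) :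
    vdeg H v ≠ 1 := by
  intro h
  unfold vdeg at h
  have h1 := Finset.card_le_one.1 h.le E (Finset.mem_filter.2 ⟨hE, hv⟩) P
    (Finset.mem_filter.2 ⟨hP, hv'⟩)
  exact hne h1

theorem cnt_extract {ι : Type} (A : Finset (ι → ℕ)) (J : Finset ι) (W : Finset ℕ)
    (e : ι → ℕ) : ∃ Us : Finset (ι → ℕ), Us.card = cnt A J W e ∧
      ∀ u ∈ Us, u ∈ A ∧ (∀ i ∈ J, u i = e i) ∧ ∀ i, i ∉ J → u i ∉ W :=
  ⟨_, rfl, fun _ hu => Finset.mem_filter.1 hu⟩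

theorem embed_type1 {α : Type} [DecidableEq α] {k ℓ w : ℕ} (H : Finset (Finset α))
    (hH : IsKTree k H) (h2 : TwoContractible H) (hov : Overlapping ℓ H)
    (hw : (vertexSet H).card ≤ w)
    (F : Finset (Finset ℕ)) (Adm : Finset (Finset ℕ) → Prop) (z : ℝ)
    (hz : ∀ S, Adm S → S.Nonempty → S.card < H.card →
      ((F.filter fun E => ¬ Adm (insert E S)).card : ℝ) ≤ z)
    (hsing : ∀ E ∈ F, Adm {E})
    (A : Finset (Fin k → ℕ)) (hA : A.Nonempty)
    (hAF : ∀ e ∈ A, Function.Injective e ∧ Finset.univ.image e ∈ F)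
    (p q : Fin k) (hpq : p ≠ q) (L : ℝ)
    (hgood : ∀ S : Finset (Fin k), p ∉ S → q ∉ S → S.card ≤ ℓ → GoodAt w A S L)
    (hL : z * (k : ℝ) ^ k < L) :
    ∃ φ : α → ℕ, Set.InjOn φ ↑(vertexSet H) ∧ (∀ E ∈ H, E.image φ ∈ F) ∧
      Adm (H.image fun E => E.image φ) := by
  obtain ⟨Tr, hTr⟩ : ∃ Tr : α → Prop, ∀ v, Tr v ↔ ¬ vdeg H v = 1 := ⟨_, fun _ => Iff.rfl⟩
  have hcardTr : ∀ E ∈ H, (E.filter Tr).card ≤ (({p, q} : Finset (Fin k))ᶜ).card := by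
    intro E hE
    rw [Finset.card_compl, Finset.card_pair hpq, Fintype.card_fin]
    have h3 := h2 E hE
    have h4 := Finset.card_filter_add_card_filter_not (s := E) (fun v => vdeg H v = 1)
    rw [hH.2 E hE] at h4
    have h5 : (E.filter Tr).card = (E.filter fun v => ¬ vdeg H v = 1).card := by
      congr 1
      ext v
      simp [hTr]
    omega
  have : Nonempty (Fin k) := ⟨p⟩
  obtain ⟨ψ0, hψ0⟩ := hyper_col H Tr (({p, q} : Finset (Fin k))ᶜ) hcardTr H hH.1 subset_rfl
  have hψE : ∀ E ∈ H, ∃ g : α → Fin k, (∀ v ∈ E, Tr v → g v = ψ0 v) ∧ Set.InjOn g ↑E := by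
    intro E hE
    obtain ⟨g, h1, h3, -⟩ := ext_inj ψ0 (E.filter Tr) E (Finset.filter_subset _ _) Finset.univ
      (by simp) (hψ0 E hE).1 (by rw [hH.2 E hE]; simp)
    exact ⟨g, fun v hv hr => h1 v (Finset.mem_filter.2 ⟨hv, hr⟩), h3⟩
  obtain ⟨φ, a1, a2, -, a4⟩ := embed_abstract H F Adm
    (fun E φ => ∃ e ∈ A, ∀ v ∈ E, Tr v → φ v = e (ψ0 v))
    (by
      rintro E φ φ' h ⟨e, he, h3⟩
      exact ⟨e, he, fun v hv hr => (h v hv) ▸ h3 v hv hr⟩)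
    (by
      intro E hE
      obtain ⟨g, g1, g2⟩ := hψE E hE
      obtain ⟨e, he⟩ := hA
      have him := image_comp_univ E g (hH.2 E hE) g2 e
      refine ⟨fun v => e (g v), ?_, ?_, ⟨e, he, ?_⟩, ?_⟩
      · intro x hx y hy hxy
        exact g2 hx hy ((hAF e he).1 hxy)
      · rw [him]; exact (hAF e he).2
      · intro v hv hr; simp only [g1 v hv hr]
      · rw [him]; exact hsing _ (hAF e he).2)
    (by
      intro H' hH' E hE hEH' P hP hint φ hφ hQ hadm
      obtain ⟨g, g1, g2⟩ := hψE E hE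
      obtain ⟨e0, he0, hφe⟩ := hQ P hP
      have hPH : P ∈ H := hH' hP
      have hne : E ≠ P := fun h => hEH' (h ▸ hP)
      have hTrI : ∀ v ∈ E ∩ P, Tr v := fun v hv => (hTr v).2 <|
        vdeg_ne_one hE hPH hne (Finset.mem_inter.1 hv).1 (Finset.mem_inter.1 hv).2
      set J := (E ∩ P).image ψ0 with hJ
      set W := (vertexSet H').image φ with hW
      have hJpq : ∀ i ∈ J, i ≠ p ∧ i ≠ q := by
        intro i hi
        obtain ⟨v, hv, rfl⟩ := Finset.mem_image.1 hi
        have := (hψ0 E hE).2 v (Finset.mem_inter.1 hv).1 (hTrI v hv)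
        simpa using this
      have hWc : W.card ≤ w :=
        Finset.card_image_le.trans ((Finset.card_le_card (vertexSet_mono hH')).trans hw)
      have hcnt := hgood J (fun h => (hJpq p h).1 rfl) (fun h => (hJpq q h).2 rfl)
        (Finset.card_image_le.trans (hov E hE P hPH hne)) e0 he0 W hWc
      set S := H'.image fun E => E.image φ with hS
      have hSne : S.Nonempty := ⟨_, Finset.mem_image_of_mem _ hP⟩
      have hSc : S.card < H.card := lt_of_le_of_lt Finset.card_image_le
        (Finset.card_lt_card ⟨hH', fun h => hEH' (h hE)⟩)
      have hzS := hz S hadm hSne hSc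
      obtain ⟨Us, hUs, hUs'⟩ := cnt_extract A J W e0
      rw [← hUs] at hcnt
      obtain ⟨u, hu, hub⟩ := pick (k := k) Us (fun u : Fin k → ℕ => Finset.univ.image u)
        (by
          intro u hu
          have hu' := (hUs' u hu).1
          refine ⟨fun i => Finset.mem_image_of_mem _ (Finset.mem_univ i), ?_⟩
          rw [Finset.card_image_of_injective _ (hAF u hu').1]; simp)
        (F.filter fun E => ¬ Adm (insert E S))
        (by
          have : (((F.filter fun E => ¬ Adm (insert E S)).card * k ^ k : ℕ) : ℝ) <
            (Us.card : ℝ) := by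
            push_cast
            refine lt_of_le_of_lt ?_ (hL.trans_le hcnt)
            exact mul_le_mul_of_nonneg_right hzS (by positivity)
          exact_mod_cast this)
      obtain ⟨huA, huJ, huW⟩ := hUs' u hu
      have him := image_comp_univ E g (hH.2 E hE) g2 u
      have hadm' : Adm (insert (Finset.univ.image u) S) := by
        by_contra hcon
        exact hub (Finset.mem_filter.2 ⟨(hAF u huA).2, hcon⟩)
      refine ⟨fun v => u (g v), ?_, ?_, ?_, ?_, ⟨u, huA, ?_⟩, ?_⟩
      · intro v hv
        have hv' := Finset.mem_inter.1 hv
        have hr := hTrI v hv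
        simp only [g1 v hv'.1 hr]
        rw [hφe v hv'.2 hr]
        exact huJ _ (Finset.mem_image_of_mem _ hv)
      · intro x hx y hy hxy
        exact g2 hx hy ((hAF u huA).1 hxy)
      · intro v hv hvP
        apply huW
        intro hmem
        obtain ⟨v', hv', hvv⟩ := Finset.mem_image.1 hmem
        have hv'' := Finset.mem_inter.1 hv'
        rw [← g1 v' hv''.1 (hTrI v' hv')] at hvv
        have := g2 hv''.1 hv hvv
        exact hvP (this ▸ hv''.2)
      · rw [him]; exact (hAF u huA).2
      · intro v hv hr; simp only [g1 v hv hr]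
      · rw [him]; exact hadm') H hH.1 subset_rfl
  exact ⟨φ, a1, a2, a4⟩

theorem embed_type2 {α : Type} [DecidableEq α] {k' ℓ w σ : ℕ} (hk' : 0 < k')
    (H : Finset (Finset α))
    (hH : IsKTree (k' + 1) H) (hov : Overlapping ℓ H)
    (S : Finset α) (hS : IsCrosscut H S) (hSσ : S.card = σ)
    (hw : (vertexSet H).card ≤ w)
    (F : Finset (Finset ℕ)) (Adm : Finset (Finset ℕ) → Prop) (z : ℝ)
    (hz : ∀ S, Adm S → S.Nonempty → S.card < H.card →
      ((F.filter fun E => ¬ Adm (insert E S)).card : ℝ) ≤ z)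
    (hsing : ∀ E ∈ F, Adm {E})
    (U : Finset (Fin k' → ℕ)) (hU : U.Nonempty) (xs : Fin σ → (Fin k' → ℕ) → ℕ)
    (V2 : Finset ℕ)
    (hUi : ∀ u ∈ U, Function.Injective u) (hUV : ∀ u ∈ U, ∀ i, u i ∉ V2)
    (hxV : ∀ u ∈ U, ∀ j, xs j u ∈ V2)
    (hxi : ∀ u ∈ U, ∀ j j', xs j u = xs j' u → j = j')
    (hUF : ∀ u ∈ U, ∀ j, insert (xs j u) (Finset.univ.image u) ∈ F)
    (L : ℝ)
    (hg1 : ∀ J : Finset (Fin k'), J.card ≤ ℓ → GoodAt w U J L)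
    (hg2 : ∀ u ∈ U, ∀ j, ∀ J : Finset (Fin k'), J.card + 1 ≤ ℓ → ∀ W : Finset ℕ, W.card ≤ w →
      ∃ Us : Finset (Fin k' → ℕ), L ≤ (Us.card : ℝ) ∧ ∀ u' ∈ Us, u' ∈ U ∧
        (∀ i ∈ J, u' i = u i) ∧ xs j u' = xs j u ∧ ∀ i, i ∉ J → u' i ∉ W)
    (hL : z * ((k' + 1 : ℕ) : ℝ) ^ k' < L) :
    ∃ φ : α → ℕ, Set.InjOn φ ↑(vertexSet H) ∧ (∀ E ∈ H, E.image φ ∈ F) ∧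
      Adm (H.image fun E => E.image φ) := by
  have hone : ∀ E ∈ H, ∃ y, y ∈ E ∧ y ∈ S ∧ ∀ v ∈ E, v ∈ S → v = y := by
    intro E hE
    obtain ⟨y, hy⟩ := Finset.card_eq_one.1 (hS E hE)
    have hy' : y ∈ E ∩ S := by rw [hy]; simp
    refine ⟨y, (Finset.mem_inter.1 hy').1, (Finset.mem_inter.1 hy').2, fun v hv hvS => ?_⟩
    have : v ∈ E ∩ S := Finset.mem_inter.2 ⟨hv, hvS⟩
    rw [hy] at this
    simpa using this
  obtain ⟨R, hR⟩ : ∃ R : α → Prop, ∀ v, R v ↔ v ∉ S := ⟨_, fun _ => Iff.rfl⟩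
  have hRc : ∀ E ∈ H, (E.filter R).card = k' := by
    intro E hE
    have h1 : E.filter R = E \ S := by ext v; simp [hR]
    have h3 := Finset.card_inter_add_card_sdiff E S
    rw [hS E hE, hH.2 E hE] at h3
    rw [h1]; omega
  have : Nonempty (Fin k') := ⟨⟨0, hk'⟩⟩
  obtain ⟨ψ, hψ⟩ := hyper_col H R (Finset.univ : Finset (Fin k'))
    (fun E hE => by rw [hRc E hE]; simp) H hH.1 subset_rfl
  have hψi : ∀ E ∈ H, ∀ v ∈ E, v ∉ S → ∀ v' ∈ E, v' ∉ S → ψ v = ψ v' → v = v' := by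
    intro E hE v hv hvS v' hv' hvS' h
    exact (hψ E hE).1 (Finset.mem_filter.2 ⟨hv, (hR v).2 hvS⟩)
      (Finset.mem_filter.2 ⟨hv', (hR v').2 hvS'⟩) h
  have hψs : ∀ E ∈ H, ∀ i, ∃ v ∈ E, v ∉ S ∧ ψ v = i := by
    intro E hE i
    have h1 : (E.filter R).image ψ = Finset.univ := by
      apply Finset.eq_univ_of_card
      rw [Finset.card_image_of_injOn (hψ E hE).1, hRc E hE, Fintype.card_fin]
    have h3 : i ∈ (E.filter R).image ψ := by rw [h1]; simp
    obtain ⟨v, hv, rfl⟩ := Finset.mem_image.1 h3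
    have hv' := Finset.mem_filter.1 hv
    exact ⟨v, hv'.1, (hR v).1 hv'.2, rfl⟩
  have him : ∀ E ∈ H, ∀ u : Fin k' → ℕ, ∀ x : ℕ,
      (E.image fun v => if v ∈ S then x else u (ψ v)) = insert x (Finset.univ.image u) := by
    intro E hE u x
    obtain ⟨y, hyE, hyS, hy⟩ := hone E hE
    ext a
    simp only [Finset.mem_image, Finset.mem_insert, Finset.mem_univ, true_and]
    constructor
    · rintro ⟨v, hv, rfl⟩
      by_cases hvS : v ∈ S
      · left; simp [hvS]
      · right; exact ⟨ψ v, by simp [hvS]⟩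
    · rintro (rfl | ⟨i, rfl⟩)
      · exact ⟨y, hyE, by simp [hyS]⟩
      · obtain ⟨v, hv, hvS, rfl⟩ := hψs E hE i
        exact ⟨v, hv, by simp [hvS]⟩
  have hinj : ∀ E ∈ H, ∀ u ∈ U, ∀ j,
      Set.InjOn (fun v => if v ∈ S then xs j u else u (ψ v)) ↑E := by
    intro E hE u hu j x hx y hy hxy
    obtain ⟨y0, -, -, hy0⟩ := hone E hE
    by_cases hxS : x ∈ S <;> by_cases hyS : y ∈ S
    · rw [hy0 x hx hxS, hy0 y hy hyS]
    · simp only [hxS, hyS, if_true, if_false] at hxy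
      exact absurd (hxy ▸ hxV u hu j) (hUV u hu _)
    · simp only [hxS, hyS, if_true, if_false] at hxy
      exact absurd (hxy ▸ hxV u hu j) (hUV u hu _)
    · simp only [hxS, hyS, if_false] at hxy
      exact hψi E hE x hx hxS y hy hyS (hUi u hu hxy)
  obtain ⟨φ, a1, a2, -, a4⟩ := embed_abstract H F Adm
    (fun E φ => ∃ u ∈ U, ∃ j, ∀ v ∈ E, φ v = if v ∈ S then xs j u else u (ψ v))
    (by
      rintro E φ φ' h ⟨e, he, j, h3⟩
      exact ⟨e, he, j, fun v hv => (h v hv) ▸ h3 v hv⟩)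
    (by
      intro E hE
      obtain ⟨u, hu⟩ := hU
      obtain ⟨y, hyE, hyS, -⟩ := hone E hE
      have hσ : 0 < σ := hSσ ▸ Finset.card_pos.2 ⟨y, hyS⟩
      refine ⟨_, hinj E hE u hu ⟨0, hσ⟩, ?_, ⟨u, hu, ⟨0, hσ⟩, fun v hv => rfl⟩, ?_⟩
      · rw [him E hE]; exact hUF u hu _
      · rw [him E hE]; exact hsing _ (hUF u hu _))
    (by
      intro H' hH' E hE hEH' P hP hint φ hφ hQ hadm
      obtain ⟨u0, hu0, j0, hφu⟩ := hQ P hP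
      have hPH : P ∈ H := hH' hP
      have hne : E ≠ P := fun h => hEH' (h ▸ hP)
      set W := (vertexSet H').image φ with hW
      have hWc : W.card ≤ w :=
        Finset.card_image_le.trans ((Finset.card_le_card (vertexSet_mono hH')).trans hw)
      obtain ⟨y, hyE, hyS, hy⟩ := hone E hE
      have hov' := hov E hE P hPH hne
      have hJmem : ∀ T : Finset α, T ⊆ E → (∀ v ∈ T, v ∉ S) → (∀ v ∈ E ∩ P, v ∉ S → v ∈ T) →
          ∀ v ∈ E, v ∉ P → v ∉ S → T ⊆ P → ψ v ∉ T.image ψ := by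
        intro T hTE hTS _ v hv hvP hvS hTP hmem
        obtain ⟨v', hv', h⟩ := Finset.mem_image.1 hmem
        have := hψi E hE v' (hTE hv') (hTS v' hv') v hv hvS h
        exact hvP (this ▸ hTP hv')
      have main : ∃ (Us : Finset (Fin k' → ℕ)) (jj : (Fin k' → ℕ) → Fin σ), L ≤ (Us.card : ℝ) ∧
          ∀ u' ∈ Us, u' ∈ U ∧ (∀ v ∈ E ∩ P, v ∉ S → u' (ψ v) = φ v) ∧
            (∀ v ∈ E, v ∉ P → v ∉ S → u' (ψ v) ∉ W) ∧
            (∀ v ∈ E ∩ P, v ∈ S → xs (jj u') u' = φ v) ∧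
            (∀ v ∈ E, v ∉ P → v ∈ S → xs (jj u') u' ∉ W) := by
        by_cases hyP : y ∈ P
        · set T := (E ∩ P).erase y with hT
          have hTE : T ⊆ E := (Finset.erase_subset _ _).trans Finset.inter_subset_left
          have hTP : T ⊆ P := (Finset.erase_subset _ _).trans Finset.inter_subset_right
          have hTS : ∀ v ∈ T, v ∉ S := fun v hv hvS =>
            (Finset.mem_erase.1 hv).1 (hy v (hTE hv) hvS)
          have hTm : ∀ v ∈ E ∩ P, v ∉ S → v ∈ T := fun v hv hvS =>
            Finset.mem_erase.2 ⟨fun h => hvS (h ▸ hyS), hv⟩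
          have hTc : (T.image ψ).card + 1 ≤ ℓ := by
            have h1 : T.card + 1 = (E ∩ P).card :=
              Finset.card_erase_add_one (Finset.mem_inter.2 ⟨hyE, hyP⟩)
            have h3 : (T.image ψ).card ≤ T.card := Finset.card_image_le
            omega
          obtain ⟨Us, h1, h3⟩ := hg2 u0 hu0 j0 (T.image ψ) hTc W hWc
          refine ⟨Us, fun _ => j0, h1, fun u' hu' => ?_⟩
          obtain ⟨b1, b2, b3, b4⟩ := h3 u' hu'
          refine ⟨b1, ?_, ?_, ?_, ?_⟩
          · intro v hv hvS
            rw [b2 _ (Finset.mem_image_of_mem _ (hTm v hv hvS)), hφu v (Finset.mem_inter.1 hv).2,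
              if_neg hvS]
          · intro v hv hvP hvS
            exact b4 _ (hJmem T hTE hTS hTm v hv hvP hvS hTP)
          · intro v hv hvS
            rw [b3, hφu v (Finset.mem_inter.1 hv).2, if_pos hvS]
          · intro v hv hvP hvS
            exact absurd (hy v hv hvS ▸ hyP) hvP
        · have hTS : ∀ v ∈ E ∩ P, v ∉ S := fun v hv hvS =>
            hyP (hy v (Finset.mem_inter.1 hv).1 hvS ▸ (Finset.mem_inter.1 hv).2)
          have hyH : y ∉ vertexSet H' := fun h => hyP
            (Finset.mem_inter.1 (hint ▸ Finset.mem_inter.2 ⟨hyE, h⟩ : y ∈ E ∩ P)).2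
          have hcnt := hg1 ((E ∩ P).image ψ) (Finset.card_image_le.trans hov') u0 hu0 W hWc
          obtain ⟨Us, hUs, hUs'⟩ := cnt_extract U ((E ∩ P).image ψ) W u0
          rw [← hUs] at hcnt
          have hj : ∀ u' : Fin k' → ℕ, ∃ j : Fin σ, u' ∈ U → xs j u' ∉ W := by
            intro u'
            have hσ : 0 < σ := hSσ ▸ Finset.card_pos.2 ⟨y, hyS⟩
            by_cases hu' : u' ∈ U
            swap
            · exact ⟨⟨0, hσ⟩, fun h => absurd h hu'⟩
            have hlt : ((S ∩ vertexSet H').image φ).card <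
                ((Finset.univ : Finset (Fin σ)).image fun j => xs j u').card := by
              rw [Finset.card_image_of_injective _ (fun j j' h => hxi u' hu' j j' h)]
              refine lt_of_le_of_lt Finset.card_image_le ?_
              rw [Finset.card_univ, Fintype.card_fin, ← hSσ]
              apply Finset.card_lt_card
              exact ⟨Finset.inter_subset_left, fun h => hyH (Finset.mem_inter.1 (h hyS)).2⟩
            obtain ⟨c, hc, hcn⟩ := Finset.exists_mem_notMem_of_card_lt_card hlt
            obtain ⟨j, -, rfl⟩ := Finset.mem_image.1 hc
            refine ⟨j, fun _ hmem => ?_⟩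
            obtain ⟨v, hv, hvx⟩ := Finset.mem_image.1 hmem
            by_cases hvS : v ∈ S
            · exact hcn (hvx ▸ Finset.mem_image_of_mem _ (Finset.mem_inter.2 ⟨hvS, hv⟩))
            · obtain ⟨E', hE', hvE'⟩ := mem_vertexSet.1 hv
              obtain ⟨u1, hu1, j1, hq⟩ := hQ E' hE'
              have h5 := hq v hvE'
              rw [if_neg hvS, hvx] at h5
              exact hUV u1 hu1 _ (h5 ▸ hxV u' hu' j)
          choose jj hjj using hj
          refine ⟨Us, jj, hcnt, fun u' hu' => ?_⟩
          obtain ⟨b1, b2, b3⟩ := hUs' u' hu'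
          refine ⟨b1, ?_, ?_, ?_, ?_⟩
          · intro v hv hvS
            rw [b2 _ (Finset.mem_image_of_mem _ hv), hφu v (Finset.mem_inter.1 hv).2,
              if_neg hvS]
          · intro v hv hvP hvS
            exact b3 _ (hJmem (E ∩ P) Finset.inter_subset_left hTS (fun v hv _ => hv) v hv hvP hvS
              Finset.inter_subset_right)
          · intro v hv hvS
            exact absurd hvS (hTS v hv)
          · intro v hv hvP hvS
            exact hjj u' b1
      obtain ⟨Us, jj, hUsL, hUs⟩ := main
      set T := H'.image fun E => E.image φ with hT
      have hTne : T.Nonempty := ⟨_, Finset.mem_image_of_mem _ hP⟩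
      have hTc : T.card < H.card := lt_of_le_of_lt Finset.card_image_le
        (Finset.card_lt_card ⟨hH', fun h => hEH' (h hE)⟩)
      have hzS := hz T hadm hTne hTc
      obtain ⟨u, hu, hub⟩ := pick (k := k' + 1) Us
        (fun u : Fin k' → ℕ => insert (xs (jj u) u) (Finset.univ.image u))
        (by
          intro u hu
          have hu' := (hUs u hu).1
          refine ⟨fun i => Finset.mem_insert_of_mem
            (Finset.mem_image_of_mem _ (Finset.mem_univ i)), ?_⟩
          rw [Finset.card_insert_of_notMem, Finset.card_image_of_injective _ (hUi u hu')]
          · simp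
          · intro hmem
            obtain ⟨i, -, hi⟩ := Finset.mem_image.1 hmem
            exact hUV u hu' i (hi ▸ hxV u hu' _))
        (F.filter fun E => ¬ Adm (insert E T))
        (by
          have : (((F.filter fun E => ¬ Adm (insert E T)).card * (k' + 1) ^ k' : ℕ) : ℝ) <
            (Us.card : ℝ) := by
            rw [Nat.cast_mul, Nat.cast_pow]
            refine lt_of_le_of_lt ?_ (hL.trans_le hUsL)
            exact mul_le_mul_of_nonneg_right hzS (by positivity)
          exact_mod_cast this)
      obtain ⟨huU, b1, b2, b3, b4⟩ := hUs u hu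
      have hF := hUF u huU (jj u)
      have hadm' : Adm (insert (insert (xs (jj u) u) (Finset.univ.image u)) T) := by
        by_contra hcon
        exact hub (Finset.mem_filter.2 ⟨hF, hcon⟩)
      refine ⟨_, ?_, hinj E hE u huU (jj u), ?_, ?_, ⟨u, huU, jj u, fun v hv => rfl⟩, ?_⟩
      · intro v hv
        by_cases hvS : v ∈ S
        · simp only [hvS, if_true]; exact b3 v hv hvS
        · simp only [hvS, if_false]; exact b1 v hv hvS
      · intro v hv hvP
        by_cases hvS : v ∈ S
        · simp only [hvS, if_true]; exact b4 v hv hvP hvS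
        · simp only [hvS, if_false]; exact b2 v hv hvP hvS
      · rw [him E hE]; exact hF
      · rw [him E hE]; exact hadm') H hH.1 subset_rfl
  exact ⟨φ, a1, a2, a4⟩

/-! ### The structural proposition -/

def T1free (k ℓ w : ℕ) (F : Finset (Finset ℕ)) (Z : ℝ) : Prop :=
  ∀ A : Finset (Fin k → ℕ), A.Nonempty →
    (∀ e ∈ A, Function.Injective e ∧ Finset.univ.image e ∈ F) →
    ∀ p q : Fin k, p ≠ q → ∀ L : ℝ,
      (∀ S : Finset (Fin k), p ∉ S → q ∉ S → S.card ≤ ℓ → GoodAt w A S L) → L ≤ Z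

noncomputable def tup (m : ℕ) (E : Finset ℕ) : Fin m → ℕ :=
  if h : E.card = m then E.orderEmbOfFin h else fun _ => 0

theorem tup_eq {m : ℕ} {E : Finset ℕ} (h : E.card = m) : tup m E = E.orderEmbOfFin h := by
  unfold tup; rw [dif_pos h]

theorem tup_mono {m : ℕ} {E : Finset ℕ} (h : E.card = m) : StrictMono (tup m E) := by
  rw [tup_eq h]; exact (E.orderEmbOfFin h).strictMono

theorem tup_inj {m : ℕ} {E : Finset ℕ} (h : E.card = m) : Function.Injective (tup m E) :=
  (tup_mono h).injective

theorem tup_mem {m : ℕ} {E : Finset ℕ} (h : E.card = m) (i : Fin m) : tup m E i ∈ E := by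
  rw [tup_eq h]; exact Finset.orderEmbOfFin_mem E h i

theorem tup_image {m : ℕ} {E : Finset ℕ} (h : E.card = m) : Finset.univ.image (tup m E) = E := by
  apply Finset.eq_of_subset_of_card_le
  · intro x hx
    obtain ⟨i, -, rfl⟩ := Finset.mem_image.1 hx
    exact tup_mem h i
  · rw [Finset.card_image_of_injective _ (tup_inj h), h]; simp

theorem tup_erase {m : ℕ} {E : Finset ℕ} (h : E.card = m + 1) (x : Fin (m + 1)) :
    (fun i => tup (m + 1) E (x.succAbove i)) = tup m (E.erase (tup (m + 1) E x)) := by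
  have hc : (E.erase (tup (m + 1) E x)).card = m := by
    rw [Finset.card_erase_of_mem (tup_mem h x), h]; rfl
  rw [tup_eq hc]
  apply Finset.orderEmbOfFin_unique
  · intro i
    exact Finset.mem_erase.2 ⟨fun h' => Fin.succAbove_ne x i (tup_inj h h'), tup_mem h _⟩
  · exact (tup_mono h).comp (Fin.strictMono_succAbove x)

theorem tup_injOn {m : ℕ} (G : Finset (Finset ℕ)) (h : ∀ E ∈ G, E.card = m) :
    Set.InjOn (tup m) ↑G := by
  intro E hE E' hE' hEE
  rw [← tup_image (h E hE), ← tup_image (h E' hE'), hEE]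

theorem div_pow_le {x : ℝ} {n ℓ s : ℕ} (hx : 0 ≤ x) (hn : 1 ≤ n) (hs : s ≤ ℓ) :
    x / (n : ℝ) ^ ℓ ≤ x / (n : ℝ) ^ s := by
  have hn' : (1 : ℝ) ≤ n := by exact_mod_cast hn
  apply div_le_div_of_nonneg_left hx (by positivity)
  exact pow_le_pow_right₀ hn' hs

theorem center (k' ℓ w : ℕ) (hk' : 1 ≤ k') (hw : 1 ≤ w) (θ κ : ℝ) (hθ : 0 < θ) (hκ : 0 < κ) :
    ∃ δ : ℝ, 0 < δ ∧ ∃ n₀ : ℕ, ∀ n ≥ n₀, ∀ (M Z : ℝ) (F G : Finset (Finset ℕ)), G ⊆ F →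
      IsKGraphOn (k' + 1) n F → κ * (n : ℝ) ^ k' ≤ M → θ * M ≤ G.card →
      T1free (k' + 1) ℓ w F Z → Z < δ * M / (n : ℝ) ^ ℓ →
      ∃ G' ⊆ G, G'.Nonempty ∧ δ * M ≤ G'.card ∧ ∃ x : Finset ℕ → ℕ, (∀ E ∈ G', x E ∈ E) ∧
        ∀ E ∈ G', ∀ E' ∈ G', E.erase (x E) = E'.erase (x E') → E = E' := by
  obtain ⟨δ, hδ, n₀, h⟩ := dich (ι := Fin (k' + 1)) (by simp; omega) w hw θ κ hθ hκ
  refine ⟨δ, hδ, max n₀ 1, ?_⟩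
  intro n hn M Z F G hGF hF hM hG hT hZ
  have hn0 : n₀ ≤ n := le_trans (le_max_left _ _) hn
  have hn1 : 1 ≤ n := le_trans (le_max_right _ _) hn
  have hGc : ∀ E ∈ G, E.card = k' + 1 := fun E hE => (hF E (hGF hE)).2
  have hM0 : 0 ≤ M := le_trans (by positivity) hM
  obtain ⟨A', hA', hne, hc, hor⟩ := h n hn0 M (G.image (tup (k' + 1))) (by simpa using hM)
    (by
      intro e he i
      obtain ⟨E, hE, rfl⟩ := Finset.mem_image.1 he
      exact (hF E (hGF hE)).1 (tup_mem (hGc E hE) i))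
    (by rw [Finset.card_image_of_injOn (tup_injOn G hGc)]; exact hG)
  have hAF : ∀ e ∈ A', Function.Injective e ∧ Finset.univ.image e ∈ F := by
    intro e he
    obtain ⟨E, hE, rfl⟩ := Finset.mem_image.1 (hA' he)
    exact ⟨tup_inj (hGc E hE), by rw [tup_image (hGc E hE)]; exact hGF hE⟩
  rcases hor with ⟨p, q, hpq, hgood⟩ | ⟨x, -, hx⟩
  · exfalso
    have := hT A' hne hAF p q hpq (δ * M / (n : ℝ) ^ ℓ) (fun S hp hq hS =>
      (hgood S hp hq).le (div_pow_le (by positivity) hn1 hS))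
    linarith
  · set G' := G.filter fun E => tup (k' + 1) E ∈ A' with hG'
    have himg : G'.image (tup (k' + 1)) = A' := by
      ext e
      constructor
      · intro he
        obtain ⟨E, hE, rfl⟩ := Finset.mem_image.1 he
        exact (Finset.mem_filter.1 hE).2
      · intro he
        obtain ⟨E, hE, rfl⟩ := Finset.mem_image.1 (hA' he)
        exact Finset.mem_image_of_mem _ (Finset.mem_filter.2 ⟨hE, he⟩)
    have hsub : G' ⊆ G := Finset.filter_subset _ _
    refine ⟨G', hsub, ?_, ?_, fun E => tup (k' + 1) E x, ?_, ?_⟩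
    · rw [← himg] at hne; exact Finset.image_nonempty.1 hne
    · refine hc.trans ?_
      rw [← himg]
      exact_mod_cast Finset.card_image_le
    · intro E hE; exact tup_mem (hGc E (hsub hE)) x
    · intro E hE E' hE' hEE
      have h1 := tup_erase (hGc E (hsub hE)) x
      have h2 := tup_erase (hGc E' (hsub hE')) x
      rw [hEE, ← h2] at h1
      have h3 := hx (tup (k' + 1) E) (Finset.mem_filter.1 hE).2 (tup (k' + 1) E')
        (Finset.mem_filter.1 hE').2 (by
          intro i hi
          obtain ⟨j, rfl⟩ := Fin.exists_succAbove_eq hi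
          exact congrFun h1 j)
      exact tup_injOn G hGc (hsub hE) (hsub hE') h3

theorem erase_card_le {k' n : ℕ} (G : Finset (Finset ℕ)) (hG : IsKGraphOn (k' + 1) n G)
    (x : Finset ℕ → ℕ) (hx : ∀ E ∈ G, x E ∈ E)
    (hi : ∀ E ∈ G, ∀ E' ∈ G, E.erase (x E) = E'.erase (x E') → E = E') :
    G.card ≤ n ^ k' := by
  have h1 : (G.image fun E => E.erase (x E)) ⊆ (vtx n).powersetCard k' := by
    intro T hT
    obtain ⟨E, hE, rfl⟩ := Finset.mem_image.1 hT
    rw [Finset.mem_powersetCard]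
    refine ⟨(Finset.erase_subset _ _).trans (hG E hE).1, ?_⟩
    rw [Finset.card_erase_of_mem (hx E hE), (hG E hE).2]; rfl
  have h2 := Finset.card_le_card h1
  rw [Finset.card_image_of_injOn (fun E hE E' hE' h => hi E hE E' hE' h),
    Finset.card_powersetCard] at h2
  refine h2.trans ?_
  have : (vtx n).card = n := by simp [vtx]
  rw [this]
  exact Nat.choose_le_pow n k'

theorem peel (k' ℓ w : ℕ) (hk' : 1 ≤ k') (hw : 1 ≤ w) (ζ : ℝ) (hζ : 0 < ζ) :
    ∃ δ : ℝ, 0 < δ ∧ ∃ n₀ : ℕ, ∀ n ≥ n₀, ∀ (Z : ℝ) (F : Finset (Finset ℕ)),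
      IsKGraphOn (k' + 1) n F → T1free (k' + 1) ℓ w F Z → Z < δ * (n : ℝ) ^ k' / (n : ℝ) ^ ℓ →
      ∀ G ⊆ F, ∃ G' ⊆ G, (G.card : ℝ) ≤ G'.card + ζ * (n : ℝ) ^ k' ∧
        ∃ x : Finset ℕ → ℕ, (∀ E ∈ G', x E ∈ E) ∧
        ∀ T, ((G'.filter fun E => E.erase (x E) = T).card : ℝ) * (δ * (n : ℝ) ^ k') ≤ G'.card := by
  obtain ⟨δ, hδ, n₀, h⟩ := center k' ℓ w hk' hw ζ 1 hζ one_pos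
  refine ⟨δ, hδ, n₀, ?_⟩
  intro n hn Z F hF hT hZ G
  induction G using Finset.strongInduction with
  | H G ih =>
    intro hGF
    by_cases hc : ζ * (n : ℝ) ^ k' ≤ G.card
    swap
    · refine ⟨∅, by simp, by simp; linarith, fun _ => 0, by simp, by simp⟩
    obtain ⟨G1, hG1, hne, hc1, x1, hx1, hi1⟩ := h n hn ((n : ℝ) ^ k') Z F G hGF hF (by simp) hc hT hZ
    have hss : G \ G1 ⊂ G := Finset.sdiff_ssubset hG1 hne
    obtain ⟨G2, hG2, hc2, x2, hx2, hm2⟩ := ih (G \ G1) hss (hss.1.trans hGF)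
    have hdis : Disjoint G1 G2 := by
      rw [Finset.disjoint_left]
      intro E h1 h2
      exact (Finset.mem_sdiff.1 (hG2 h2)).2 h1
    have hcard : (G1 ∪ G2).card = G1.card + G2.card := Finset.card_union_of_disjoint hdis
    refine ⟨G1 ∪ G2, Finset.union_subset hG1 (hG2.trans hss.1), ?_,
      fun E => if E ∈ G1 then x1 E else x2 E, ?_, ?_⟩
    · have h3 := Finset.card_sdiff_add_card_eq_card hG1
      rw [hcard, ← h3]; push_cast; linarith
    · intro E hE
      by_cases hE1 : E ∈ G1
      · simp only [hE1, if_true]; exact hx1 E hE1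
      · simp only [hE1, if_false]
        exact hx2 E ((Finset.mem_union.1 hE).resolve_left hE1)
    · intro T
      have h3 : ((G1 ∪ G2).filter fun E => E.erase (if E ∈ G1 then x1 E else x2 E) = T).card ≤
          1 + (G2.filter fun E => E.erase (x2 E) = T).card := by
        rw [Finset.filter_union]
        refine (Finset.card_union_le _ _).trans ?_
        apply add_le_add
        · rw [Finset.card_le_one]
          intro E hE E' hE'
          rw [Finset.mem_filter] at hE hE'
          have a1 := hE.2
          have a2 := hE'.2
          rw [if_pos hE.1] at a1
          rw [if_pos hE'.1] at a2
          exact hi1 E hE.1 E' hE'.1 (a1.trans a2.symm)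
        · apply Finset.card_le_card
          intro E hE
          rw [Finset.mem_filter] at hE ⊢
          have hE1 : E ∉ G1 := fun h1 => Finset.disjoint_left.1 hdis h1 hE.1
          have a1 := hE.2
          rw [if_neg hE1] at a1
          exact ⟨hE.1, a1⟩
      have h4 : (((G1 ∪ G2).filter fun E => E.erase (if E ∈ G1 then x1 E else x2 E) = T).card : ℝ) ≤
          1 + (G2.filter fun E => E.erase (x2 E) = T).card := by exact_mod_cast h3
      have h5 := hm2 T
      have h6 : 0 ≤ δ * (n : ℝ) ^ k' := by positivity
      have h7 := mul_le_mul_of_nonneg_right h4 h6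
      rw [hcard]; push_cast
      linarith

theorem heavy_count {k' n σ : ℕ} (hσ : 1 ≤ σ) (G : Finset (Finset ℕ))
    (hG : IsKGraphOn (k' + 1) n G)
    (x : Finset ℕ → ℕ) (hx : ∀ E ∈ G, x E ∈ E) (m : ℝ)
    (hm : ∀ T, ((G.filter fun E => E.erase (x E) = T).card : ℝ) ≤ m) :
    ∃ D ⊆ (vtx n).powersetCard k', (G.card : ℝ) ≤ D.card * m + ((σ : ℝ) - 1) * n.choose k' ∧
      ∀ T ∈ D, σ ≤ (G.filter fun E => E.erase (x E) = T).card := by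
  refine ⟨((vtx n).powersetCard k').filter
    fun T => σ ≤ (G.filter fun E => E.erase (x E) = T).card, Finset.filter_subset _ _, ?_,
    fun T hT => (Finset.mem_filter.1 hT).2⟩
  have h1 : G.card = ∑ T ∈ (vtx n).powersetCard k', (G.filter fun E => E.erase (x E) = T).card := by
    apply Finset.card_eq_sum_card_fiberwise
    intro E hE
    rw [Finset.mem_coe, Finset.mem_powersetCard]
    refine ⟨(Finset.erase_subset _ _).trans (hG E hE).1, ?_⟩
    rw [Finset.card_erase_of_mem (hx E hE), (hG E hE).2]; rfl
  have h2 : (G.card : ℝ) ≤ ∑ T ∈ (vtx n).powersetCard k',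
      ((if σ ≤ (G.filter fun E => E.erase (x E) = T).card then m else 0) + ((σ : ℝ) - 1)) := by
    rw [h1]; push_cast
    apply Finset.sum_le_sum
    intro T _
    have hσ' : (1 : ℝ) ≤ σ := by exact_mod_cast hσ
    split_ifs with hc
    · have := hm T
      linarith
    · have h3 : (G.filter fun E => E.erase (x E) = T).card + 1 ≤ σ := by omega
      have h4 : ((G.filter fun E => E.erase (x E) = T).card : ℝ) + 1 ≤ σ := by exact_mod_cast h3
      linarith
  rw [Finset.sum_add_distrib, ← Finset.sum_filter, Finset.sum_const, Finset.sum_const,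
    nsmul_eq_mul, nsmul_eq_mul, Finset.card_powersetCard] at h2
  have : (vtx n).card = n := by simp [vtx]
  rw [this] at h2
  linarith

theorem heavy_choose {k' n σ : ℕ} (F G : Finset (Finset ℕ)) (hGF : G ⊆ F)
    (hF : IsKGraphOn (k' + 1) n F)
    (x : Finset ℕ → ℕ) (hx : ∀ E ∈ G, x E ∈ E) (T : Finset ℕ)
    (hT : σ ≤ (G.filter fun E => E.erase (x E) = T).card) :
    ∃ X : Fin σ → ℕ, Function.Injective X ∧ ∀ j, X j ∉ T ∧ insert (X j) T ∈ F ∧ X j ∈ vtx n := by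
  have hrec : ∀ E ∈ (G.filter fun E => E.erase (x E) = T), insert (x E) T = E ∧ E ∈ G := by
    intro E hE
    obtain ⟨h1, h2⟩ := Finset.mem_filter.1 hE
    exact ⟨by rw [← h2]; exact Finset.insert_erase (hx E h1), h1⟩
  have hinj : Set.InjOn x ↑(G.filter fun E => E.erase (x E) = T) := by
    intro E hE E' hE' h
    rw [← (hrec E hE).1, ← (hrec E' hE').1, h]
  rw [← Finset.card_image_of_injOn hinj] at hT
  obtain ⟨Y, hY, hYc⟩ := Finset.exists_subset_card_eq hT
  refine ⟨tup σ Y, tup_inj hYc, fun j => ?_⟩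
  obtain ⟨E, hE, hEx⟩ := Finset.mem_image.1 (hY (tup_mem hYc j))
  rw [← hEx]
  obtain ⟨h1, h2⟩ := hrec E hE
  refine ⟨?_, ?_, ?_⟩
  · rw [← (Finset.mem_filter.1 hE).2]; simp
  · rw [h1]; exact hGF h2
  · exact (hF E (hGF h2)).1 (hx E h2)

theorem split_avg {n k' σ : ℕ} (D : Finset (Finset ℕ)) (hD : D ⊆ (vtx n).powersetCard k')
    (X : Finset ℕ → Finset ℕ)
    (hX : ∀ T ∈ D, (X T).card = σ ∧ X T ⊆ vtx n ∧ Disjoint (X T) T) :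
    ∃ V2 : Finset ℕ, D.card ≤ 2 ^ (k' + σ) *
      (D.filter fun T => Disjoint T V2 ∧ X T ⊆ V2).card := by
  have hvc : (vtx n).card = n := by simp [vtx]
  have h1 : ∑ V ∈ (vtx n).powerset, D.card ≤ ∑ V ∈ (vtx n).powerset,
      2 ^ (k' + σ) * (D.filter fun T => Disjoint T V ∧ X T ⊆ V).card := by
    have h2 : ∑ V ∈ (vtx n).powerset, (D.filter fun T => Disjoint T V ∧ X T ⊆ V).card =
        ∑ T ∈ D, ((vtx n).powerset.filter fun V => Disjoint T V ∧ X T ⊆ V).card := by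
      simp only [Finset.card_filter]
      exact Finset.sum_comm
    have h3 : ∀ T ∈ D, 2 ^ n ≤ 2 ^ (k' + σ) *
        ((vtx n).powerset.filter fun V => Disjoint T V ∧ X T ⊆ V).card := by
      intro T hT
      obtain ⟨hTs, hTc⟩ := Finset.mem_powersetCard.1 (hD hT)
      obtain ⟨x1, x2, x3⟩ := hX T hT
      have hs : X T ⊆ vtx n \ T := Finset.subset_sdiff.2 ⟨x2, x3⟩
      have h4 : Finset.Icc (X T) (vtx n \ T) ⊆
          (vtx n).powerset.filter fun V => Disjoint T V ∧ X T ⊆ V := by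
        intro V hV
        obtain ⟨v1, v2⟩ := Finset.mem_Icc.1 hV
        have v3 := Finset.subset_sdiff.1 v2
        exact Finset.mem_filter.2 ⟨Finset.mem_powerset.2 v3.1, v3.2.symm, v1⟩
      have h5 := Finset.card_le_card h4
      rw [Finset.card_Icc_finset hs, Finset.card_sdiff_of_subset hTs, hvc, hTc, x1] at h5
      refine le_trans ?_ (Nat.mul_le_mul_left _ h5)
      rw [← pow_add]
      apply Nat.pow_le_pow_right (by norm_num)
      omega
    rw [← Finset.mul_sum, h2, Finset.mul_sum, Finset.sum_const, Finset.card_powerset, hvc,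
      smul_eq_mul]
    have h6 := Finset.sum_le_sum h3
    rw [Finset.sum_const, smul_eq_mul] at h6
    linarith
  obtain ⟨V, -, hV⟩ := Finset.exists_le_of_sum_le ⟨∅, by simp⟩ h1
  exact ⟨V, hV⟩

theorem setup {k' n σ : ℕ} (F G : Finset (Finset ℕ)) (hGF : G ⊆ F)
    (hF : IsKGraphOn (k' + 1) n F)
    (x : Finset ℕ → ℕ) (hx : ∀ E ∈ G, x E ∈ E)
    (D : Finset (Finset ℕ)) (hD : D ⊆ (vtx n).powersetCard k')
    (hDσ : ∀ T ∈ D, σ ≤ (G.filter fun E => E.erase (x E) = T).card) :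
    ∃ (U : Finset (Fin k' → ℕ)) (xs : Fin σ → (Fin k' → ℕ) → ℕ) (V2 : Finset ℕ),
      D.card ≤ 2 ^ (k' + σ) * U.card ∧
      (∀ u ∈ U, Function.Injective u) ∧ (∀ u ∈ U, ∀ i, u i ∉ V2) ∧
      (∀ u ∈ U, ∀ j, xs j u ∈ V2) ∧
      (∀ u ∈ U, ∀ j j', xs j u = xs j' u → j = j') ∧
      (∀ u ∈ U, ∀ j, insert (xs j u) (Finset.univ.image u) ∈ F) ∧
      (∀ u ∈ U, ∀ i, u i ∈ Finset.Icc 1 n) ∧ (∀ u ∈ U, ∀ j, xs j u ∈ Finset.Icc 1 n) := by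
  have hex : ∀ T : Finset ℕ, ∃ X : Fin σ → ℕ, T ∈ D → Function.Injective X ∧
      ∀ j, X j ∉ T ∧ insert (X j) T ∈ F ∧ X j ∈ vtx n := by
    intro T
    by_cases hT : T ∈ D
    · obtain ⟨X, hX⟩ := heavy_choose F G hGF hF x hx T (hDσ T hT)
      exact ⟨X, fun _ => hX⟩
    · exact ⟨fun _ => 0, fun h => absurd h hT⟩
  choose X hX using hex
  obtain ⟨V2, hV2⟩ := split_avg (σ := σ) D hD (fun T => Finset.univ.image (X T)) (by
    intro T hT
    obtain ⟨h1, h2⟩ := hX T hT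
    refine ⟨?_, ?_, ?_⟩
    · rw [Finset.card_image_of_injective _ h1]; simp
    · intro v hv
      obtain ⟨j, -, rfl⟩ := Finset.mem_image.1 hv
      exact (h2 j).2.2
    · rw [Finset.disjoint_left]
      intro v hv
      obtain ⟨j, -, rfl⟩ := Finset.mem_image.1 hv
      exact (h2 j).1)
  set D' := D.filter fun T => Disjoint T V2 ∧ Finset.univ.image (X T) ⊆ V2 with hD'
  have hmem : ∀ u ∈ D'.image (tup k'), ∃ T, T ∈ D ∧ T.card = k' ∧ T ⊆ vtx n ∧ tup k' T = u ∧
      Disjoint T V2 ∧ Finset.univ.image (X T) ⊆ V2 ∧ Finset.univ.image u = T := by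
    intro u hu
    obtain ⟨T, hT, rfl⟩ := Finset.mem_image.1 hu
    obtain ⟨hT1, hT2, hT3⟩ := Finset.mem_filter.1 hT
    obtain ⟨hTs, hTc⟩ := Finset.mem_powersetCard.1 (hD hT1)
    exact ⟨T, hT1, hTc, hTs, rfl, hT2, hT3, tup_image hTc⟩
  refine ⟨D'.image (tup k'), fun j u => X (Finset.univ.image u) j, V2, ?_, ?_, ?_, ?_, ?_, ?_, ?_, ?_⟩
  · rw [Finset.card_image_of_injOn]
    · exact hV2
    · apply tup_injOn
      intro T hT
      exact (Finset.mem_powersetCard.1 (hD (Finset.mem_filter.1 hT).1)).2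
  · intro u hu
    obtain ⟨T, t1, t2, t3, t4, t5, t6, t7⟩ := hmem u hu
    rw [← t4]; exact tup_inj t2
  · intro u hu i
    obtain ⟨T, t1, t2, t3, t4, t5, t6, t7⟩ := hmem u hu
    rw [← t4]
    exact Finset.disjoint_left.1 t5 (tup_mem t2 i)
  · intro u hu j
    obtain ⟨T, t1, t2, t3, t4, t5, t6, t7⟩ := hmem u hu
    simp only [t7]
    exact t6 (Finset.mem_image_of_mem _ (Finset.mem_univ j))
  · intro u hu j j' h
    obtain ⟨T, t1, t2, t3, t4, t5, t6, t7⟩ := hmem u hu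
    simp only [t7] at h
    exact (hX T t1).1 h
  · intro u hu j
    obtain ⟨T, t1, t2, t3, t4, t5, t6, t7⟩ := hmem u hu
    simp only [t7]
    exact ((hX T t1).2 j).2.1
  · intro u hu i
    obtain ⟨T, t1, t2, t3, t4, t5, t6, t7⟩ := hmem u hu
    rw [← t4]; exact t3 (tup_mem t2 i)
  · intro u hu j
    obtain ⟨T, t1, t2, t3, t4, t5, t6, t7⟩ := hmem u hu
    simp only [t7]
    exact ((hX T t1).2 j).2.2

theorem no_none (k' ℓ w : ℕ) (hℓ : ℓ + 1 ≤ k') (hw : 1 ≤ w) (θ : ℝ) (hθ : 0 < θ) :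
    ∃ δ : ℝ, 0 < δ ∧ ∃ n₀ : ℕ, ∀ n ≥ n₀, ∀ R : Finset (Fin k' → ℕ),
      (∀ u ∈ R, ∀ i, u i ∈ Finset.Icc 1 n) → θ * (n : ℝ) ^ k' ≤ R.card →
      ∃ A ⊆ R, A.Nonempty ∧ ∀ J : Finset (Fin k'), J.card ≤ ℓ →
        GoodAt w A J (δ * (n : ℝ) ^ k' / (n : ℝ) ^ ℓ) := by
  have : Nonempty (Fin k') := ⟨⟨0, by omega⟩⟩
  obtain ⟨δ, hδ, h⟩ := hom (ι := Fin k') w hw θ hθ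
  obtain ⟨n₁, hn₁⟩ := exists_nat_gt (1 / δ)
  refine ⟨δ, hδ, max n₁ 1, ?_⟩
  intro n hn R hR hc
  have hn1 : 1 ≤ n := le_trans (le_max_right _ _) hn
  have hnn : (0 : ℝ) < n := by exact_mod_cast hn1
  have hnδ : 1 < δ * n := by
    have h1 : (n₁ : ℝ) ≤ n := by exact_mod_cast le_trans (le_max_left _ _) hn
    have h2 := hn₁.trans_le h1
    rw [div_lt_iff₀ hδ] at h2
    linarith
  obtain ⟨A, hA, hne, h1, h2⟩ := h n ((n : ℝ) ^ k') R hn1 (by positivity) hR hc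
  refine ⟨A, hA, hne, fun J hJ => ?_⟩
  rcases h2 J with hg | ⟨i, hi, hf⟩
  · exact hg.le (div_pow_le (by positivity) hn1 hJ)
  · exfalso
    obtain ⟨e, he⟩ := hne
    have h3 := h1 J e he
    obtain ⟨Us, hUs, hUs'⟩ := cnt_extract A J ∅ e
    rw [← hUs] at h3
    have h4 := card_agree_le n Us (fun u hu => hR u (hA (hUs' u hu).1)) (insert i J) e (by
      intro u hu j hj
      obtain ⟨a1, a2, -⟩ := hUs' u hu
      rcases Finset.mem_insert.1 hj with rfl | hj
      · exact hf u a1 e he a2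
      · exact a2 j hj)
    rw [Finset.card_insert_of_notMem hi, Fintype.card_fin] at h4
    have h5 : (Us.card : ℝ) ≤ (n : ℝ) ^ (k' - (J.card + 1)) := by exact_mod_cast h4
    have h6 := h3.trans h5
    rw [div_le_iff₀ (by positivity), ← pow_add] at h6
    have h7 : k' = (k' - (J.card + 1) + J.card) + 1 := by omega
    have h8 : (n : ℝ) ^ k' = (n : ℝ) ^ (k' - (J.card + 1) + J.card) * n := by
      conv_lhs => rw [h7]
      rw [pow_succ]
    rw [h8] at h6
    have h9 : (0 : ℝ) < (n : ℝ) ^ (k' - (J.card + 1) + J.card) := by positivity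
    nlinarith

theorem no_some (k' ℓ w : ℕ) (hℓ : ℓ + 1 ≤ k') (hw : 1 ≤ w) (θ : ℝ) (hθ : 0 < θ) :
    ∃ δ : ℝ, 0 < δ ∧ ∃ n₀ : ℕ, ∀ n ≥ n₀, ∀ (R : Finset (Fin k' → ℕ)) (f : (Fin k' → ℕ) → ℕ)
      (F : Finset (Finset ℕ)) (Z : ℝ),
      (∀ u ∈ R, ∀ i, u i ∈ Finset.Icc 1 n) → (∀ u ∈ R, f u ∈ Finset.Icc 1 n) →
      (∀ u ∈ R, Function.Injective u) → (∀ u ∈ R, ∀ i, u i ≠ f u) →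
      (∀ u ∈ R, insert (f u) (Finset.univ.image u) ∈ F) →
      θ * (n : ℝ) ^ k' ≤ R.card → T1free (k' + 1) ℓ w F Z →
      Z < δ * (n : ℝ) ^ k' / (n : ℝ) ^ ℓ →
      ∃ A ⊆ R, A.Nonempty ∧ ∀ u ∈ A, ∀ J : Finset (Fin k'), J.card + 1 ≤ ℓ →
        ∀ W : Finset ℕ, W.card ≤ w →
        ∃ Us : Finset (Fin k' → ℕ), δ * (n : ℝ) ^ k' / (n : ℝ) ^ ℓ ≤ (Us.card : ℝ) ∧
          ∀ u' ∈ Us, u' ∈ A ∧ (∀ i ∈ J, u' i = u i) ∧ f u' = f u ∧ ∀ i, i ∉ J → u' i ∉ W := by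
  obtain ⟨δ, hδ, n₀, h⟩ := dich (ι := Fin (k' + 1)) (by simp; omega) w hw θ 1 hθ one_pos
  refine ⟨δ, hδ, max n₀ 1, ?_⟩
  intro n hn R f F Z hRn hfn hRi hRf hRF hc hT hZ
  have hn0 : n₀ ≤ n := le_trans (le_max_left _ _) hn
  have hn1 : 1 ≤ n := le_trans (le_max_right _ _) hn
  set cs : (Fin k' → ℕ) → (Fin (k' + 1) → ℕ) := fun u => Fin.cons (f u) u with hcs
  have hcs0 : ∀ u, cs u 0 = f u := fun u => rfl
  have hcss : ∀ u i, cs u (Fin.succ i) = u i := fun u i => rfl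
  have hcsi : Function.Injective cs := by
    intro u u' huu
    funext i
    rw [← hcss u i, ← hcss u' i, huu]
  obtain ⟨A', hA', hne, -, hor⟩ := h n hn0 ((n : ℝ) ^ k') (R.image cs) (by simp)
    (by
      intro e he i
      obtain ⟨u, hu, rfl⟩ := Finset.mem_image.1 he
      refine Fin.cases ?_ (fun i => ?_) i
      · rw [hcs0]; exact hfn u hu
      · rw [hcss]; exact hRn u hu i)
    (by rw [Finset.card_image_of_injective _ hcsi]; exact hc)
  have hAF : ∀ e ∈ A', Function.Injective e ∧ Finset.univ.image e ∈ F := by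
    intro e he
    obtain ⟨u, hu, rfl⟩ := Finset.mem_image.1 (hA' he)
    constructor
    · intro i
      refine Fin.cases (fun j => ?_) (fun i j => ?_) i
      · refine Fin.cases (fun _ => rfl) (fun j hj => ?_) j
        rw [hcs0, hcss] at hj
        exact absurd hj.symm (hRf u hu j)
      · refine Fin.cases (fun hj => ?_) (fun j hj => ?_) j
        · rw [hcs0, hcss] at hj
          exact absurd hj (hRf u hu i)
        · rw [hcss, hcss] at hj
          rw [hRi u hu hj]
    · have : Finset.univ.image (cs u) = insert (f u) (Finset.univ.image u) := by
        ext a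
        simp only [Finset.mem_image, Finset.mem_insert, Finset.mem_univ, true_and]
        rw [Fin.exists_fin_succ]
        simp only [hcs0, hcss]
        constructor
        · rintro (h | h)
          · exact Or.inl h.symm
          · exact Or.inr h
        · rintro (h | h)
          · exact Or.inl h.symm
          · exact Or.inr h
      rw [this]; exact hRF u hu
  rcases hor with ⟨p, q, hpq, hgood⟩ | ⟨x, hgood, -⟩
  · exfalso
    have := hT A' hne hAF p q hpq (δ * (n : ℝ) ^ k' / (n : ℝ) ^ ℓ) (fun S hp hq hS =>
      (hgood S hp hq).le (div_pow_le (by positivity) hn1 hS))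
    linarith
  by_cases hx0 : x = 0
  swap
  · exfalso
    obtain ⟨e, he⟩ := hne
    have h1 := hgood ({0}ᶜ) (by simpa using hx0) (by
      intro hu
      have : (0 : Fin (k' + 1)) ∈ ({0}ᶜ : Finset (Fin (k' + 1))) := by rw [hu]; simp
      simp at this) e he {e 0} (by simpa using hw)
    obtain ⟨Us, hUs, hUs'⟩ := cnt_extract A' {0}ᶜ {e 0} e
    rw [← hUs] at h1
    have h2 : Us = ∅ := by
      rw [Finset.eq_empty_iff_forall_notMem]
      intro e' he'
      obtain ⟨a1, a2, a3⟩ := hUs' e' he'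
      obtain ⟨u, hu, rfl⟩ := Finset.mem_image.1 (hA' he)
      obtain ⟨u', hu', rfl⟩ := Finset.mem_image.1 (hA' a1)
      have h3 : u' = u := by
        funext i
        have := a2 (Fin.succ i) (by simp)
        rwa [hcss, hcss] at this
      have := a3 0 (by simp)
      rw [h3] at this
      simp at this
    rw [h2] at h1
    have h4 : 0 < δ * (n : ℝ) ^ k' / (n : ℝ) ^ (({0}ᶜ : Finset (Fin (k' + 1))).card) := by
      positivity
    simp only [Finset.card_empty, Nat.cast_zero] at h1
    linarith
  subst hx0
  refine ⟨R.filter fun u => cs u ∈ A', Finset.filter_subset _ _, ?_, ?_⟩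
  · obtain ⟨e, he⟩ := hne
    obtain ⟨u, hu, rfl⟩ := Finset.mem_image.1 (hA' he)
    exact ⟨u, Finset.mem_filter.2 ⟨hu, he⟩⟩
  · intro u hu J hJ W hW
    have hcard : (insert 0 (J.image Fin.succ) : Finset (Fin (k' + 1))).card ≤ ℓ := by
      refine (Finset.card_insert_le _ _).trans ?_
      have : (J.image Fin.succ).card ≤ J.card := Finset.card_image_le
      omega
    have h1 := (hgood (insert 0 (J.image Fin.succ)) (by simp) (by
      intro hu
      rw [hu, Finset.card_univ, Fintype.card_fin] at hcard
      omega)).le (div_pow_le (by positivity) hn1 hcard) (cs u) (Finset.mem_filter.1 hu).2 W hW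
    obtain ⟨Us, hUs, hUs'⟩ := cnt_extract A' (insert 0 (J.image Fin.succ)) W (cs u)
    rw [← hUs] at h1
    refine ⟨R.filter fun u' => cs u' ∈ Us, ?_, ?_⟩
    · refine h1.trans ?_
      have : Us ⊆ (R.filter fun u' => cs u' ∈ Us).image cs := by
        intro e he
        obtain ⟨u', hu', rfl⟩ := Finset.mem_image.1 (hA' (hUs' e he).1)
        exact Finset.mem_image_of_mem _ (Finset.mem_filter.2 ⟨hu', he⟩)
      have := (Finset.card_le_card this).trans Finset.card_image_le
      exact_mod_cast this
    · intro u' hu'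
      obtain ⟨b1, b2⟩ := Finset.mem_filter.1 hu'
      obtain ⟨a1, a2, a3⟩ := hUs' _ b2
      refine ⟨Finset.mem_filter.2 ⟨b1, a1⟩, ?_, ?_, ?_⟩
      · intro i hi
        have := a2 (Fin.succ i) (Finset.mem_insert_of_mem (Finset.mem_image_of_mem _ hi))
        rwa [hcss, hcss] at this
      · have := a2 0 (Finset.mem_insert_self _ _)
        rwa [hcs0, hcs0] at this
      · intro i hi
        have := a3 (Fin.succ i) (by
          simp only [Finset.mem_insert, Fin.succ_ne_zero, Finset.mem_image, false_or, not_exists,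
            not_and]
          intro j hj hji
          exact hi (Fin.succ_injective _ hji ▸ hj))
        rwa [hcss] at this

theorem closed (k' ℓ w σ : ℕ) (hℓ : ℓ + 1 ≤ k') (hw : 1 ≤ w) (θ : ℝ) (hθ : 0 < θ) :
    ∃ δ : ℝ, 0 < δ ∧ ∃ n₀ : ℕ, ∀ n ≥ n₀, ∀ (R : Finset (Fin k' → ℕ))
      (xs : Fin σ → (Fin k' → ℕ) → ℕ) (F : Finset (Finset ℕ)) (Z : ℝ),
      (∀ u ∈ R, ∀ i, u i ∈ Finset.Icc 1 n) → (∀ u ∈ R, ∀ j, xs j u ∈ Finset.Icc 1 n) →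
      (∀ u ∈ R, Function.Injective u) → (∀ u ∈ R, ∀ j, ∀ i, u i ≠ xs j u) →
      (∀ u ∈ R, ∀ j, insert (xs j u) (Finset.univ.image u) ∈ F) →
      θ * (n : ℝ) ^ k' ≤ R.card → T1free (k' + 1) ℓ w F Z →
      Z < δ * (n : ℝ) ^ k' / (n : ℝ) ^ ℓ →
      ∃ U ⊆ R, U.Nonempty ∧
        (∀ J : Finset (Fin k'), J.card ≤ ℓ → GoodAt w U J (δ * (n : ℝ) ^ k' / (n : ℝ) ^ ℓ)) ∧
        (∀ u ∈ U, ∀ j, ∀ J : Finset (Fin k'), J.card + 1 ≤ ℓ → ∀ W : Finset ℕ, W.card ≤ w →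
          ∃ Us : Finset (Fin k' → ℕ), δ * (n : ℝ) ^ k' / (n : ℝ) ^ ℓ ≤ (Us.card : ℝ) ∧
          ∀ u' ∈ Us, u' ∈ U ∧ (∀ i ∈ J, u' i = u i) ∧ xs j u' = xs j u ∧
            ∀ i, i ∉ J → u' i ∉ W) := by
  have hσ1 : (0 : ℝ) < (σ : ℝ) + 1 := by positivity
  obtain ⟨δ1, hδ1, n1, h1⟩ := no_none k' ℓ w hℓ hw (θ / (σ + 1)) (by positivity)
  obtain ⟨δ2, hδ2, n2, h2⟩ := no_some k' ℓ w hℓ hw (θ / (σ + 1)) (by positivity)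
  refine ⟨min δ1 δ2, lt_min hδ1 hδ2, max n1 n2, ?_⟩
  intro n hn R xs F Z hRn hxn hRi hRx hRF hc hT hZ
  have hn1 : n1 ≤ n := le_trans (le_max_left _ _) hn
  have hn2 : n2 ≤ n := le_trans (le_max_right _ _) hn
  set L := min δ1 δ2 * (n : ℝ) ^ k' / (n : ℝ) ^ ℓ with hL
  have hL1 : L ≤ δ1 * (n : ℝ) ^ k' / (n : ℝ) ^ ℓ := by
    apply div_le_div_of_nonneg_right _ (by positivity)
    exact mul_le_mul_of_nonneg_right (min_le_left _ _) (by positivity)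
  have hL2 : L ≤ δ2 * (n : ℝ) ^ k' / (n : ℝ) ^ ℓ := by
    apply div_le_div_of_nonneg_right _ (by positivity)
    exact mul_le_mul_of_nonneg_right (min_le_right _ _) (by positivity)
  set bad : Finset (Fin k' → ℕ) → (Fin k' → ℕ) → Option (Fin σ) → Prop := fun A u c =>
    match c with
    | none => ∃ J : Finset (Fin k'), J.card ≤ ℓ ∧ ∃ W : Finset ℕ, W.card ≤ w ∧
        (cnt A J W u : ℝ) < L
    | some j => ∃ J : Finset (Fin k'), J.card + 1 ≤ ℓ ∧ ∃ W : Finset ℕ, W.card ≤ w ∧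
        ¬ ∃ Us : Finset (Fin k' → ℕ), L ≤ (Us.card : ℝ) ∧
          ∀ u' ∈ Us, u' ∈ A ∧ (∀ i ∈ J, u' i = u i) ∧ xs j u' = xs j u ∧
            ∀ i, i ∉ J → u' i ∉ W with hbad
  by_contra hcon
  obtain ⟨c, R', hR', hcard, hb⟩ := color_class bad (by
    intro A B u c hAB hu hB
    rcases c with _ | j
    · obtain ⟨J, hJ, W, hW, h⟩ := hB
      refine ⟨J, hJ, W, hW, lt_of_le_of_lt ?_ h⟩
      exact_mod_cast cnt_mono hAB J W u
    · obtain ⟨J, hJ, W, hW, h⟩ := hB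
      refine ⟨J, hJ, W, hW, ?_⟩
      rintro ⟨Us, a1, a2⟩
      exact h ⟨Us, a1, fun u' hu' => ⟨hAB (a2 u' hu').1, (a2 u' hu').2⟩⟩) R (by
    intro A hA hne
    by_contra hno
    push Not at hno
    refine hcon ⟨A, hA, hne, ?_, ?_⟩
    · intro J hJ u hu W hW
      by_contra hlt
      exact hno u hu none ⟨J, hJ, W, hW, not_le.1 hlt⟩
    · intro u hu j J hJ W hW
      by_contra hlt
      exact hno u hu (some j) ⟨J, hJ, W, hW, hlt⟩)
  rw [Fintype.card_option, Fintype.card_fin] at hcard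
  have hcR : θ / (σ + 1) * (n : ℝ) ^ k' ≤ R'.card := by
    have h3 : (R.card : ℝ) ≤ ((σ : ℝ) + 1) * R'.card := by exact_mod_cast hcard
    rw [div_mul_eq_mul_div, div_le_iff₀ hσ1]
    linarith
  rcases c with _ | j
  · obtain ⟨A, hA, hne, hg⟩ := h1 n hn1 R' (fun u hu => hRn u (hR' hu)) hcR
    obtain ⟨u, hu, J, hJ, W, hW, hlt⟩ := hb A hA hne
    have := hg J hJ u hu W hW
    linarith
  · obtain ⟨A, hA, hne, hg⟩ := h2 n hn2 R' (xs j) F Z (fun u hu => hRn u (hR' hu))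
      (fun u hu => hxn u (hR' hu) j) (fun u hu => hRi u (hR' hu))
      (fun u hu => hRx u (hR' hu) j) (fun u hu => hRF u (hR' hu) j) hcR hT (hZ.trans_le hL2)
    obtain ⟨u, hu, J, hJ, W, hW, hlt⟩ := hb A hA hne
    apply hlt
    obtain ⟨Us, a1, a2⟩ := hg u hu J hJ W hW
    exact ⟨Us, hL2.trans a1, a2⟩

theorem choose_lower (m : ℕ) : ∃ c : ℝ, 0 < c ∧ ∃ n₀ : ℕ, ∀ n ≥ n₀,
    c * (n : ℝ) ^ m ≤ (n.choose m : ℝ) := by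
  refine ⟨1 / (2 ^ m * m.factorial), by positivity, 2 * m, ?_⟩
  intro n hn
  have h1 : ((n + 1 - m : ℕ) : ℝ) ^ m / (m.factorial : ℝ) ≤ n.choose m :=
    Nat.pow_le_choose m n
  have h2 : (n : ℝ) / 2 ≤ ((n + 1 - m : ℕ) : ℝ) := by
    rw [Nat.cast_sub (by omega)]
    have : ((2 * m : ℕ) : ℝ) ≤ n := by exact_mod_cast hn
    push_cast at this ⊢
    linarith
  have h3 : ((n : ℝ) / 2) ^ m ≤ ((n + 1 - m : ℕ) : ℝ) ^ m := pow_le_pow_left₀ (by positivity) h2 m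
  refine le_trans ?_ h1
  rw [le_div_iff₀ (by positivity)]
  refine le_trans (le_of_eq ?_) h3
  rw [div_pow]
  field_simp

theorem crosscut_pos {α : Type} [DecidableEq α] {H : Finset (Finset α)} (hne : H.Nonempty)
    {S : Finset α} (hS : IsCrosscut H S) : 1 ≤ S.card := by
  obtain ⟨E, hE⟩ := hne
  have := hS E hE
  have h2 : (E ∩ S).card ≤ S.card := Finset.card_le_card Finset.inter_subset_right
  omega

theorem KP {α : Type} [DecidableEq α] (k' ℓ σ : ℕ) (hℓ : ℓ + 1 ≤ k')
    (H : Finset (Finset α)) (hne : H.Nonempty) (hH : IsKTree (k' + 1) H) (h2 : TwoContractible H)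
    (hov : Overlapping ℓ H) (hσ : IsCrosscutNumber H σ) (ε : ℝ) (hε : 0 < ε) :
    ∃ η : ℝ, 0 < η ∧ ∃ n₀ : ℕ, ∀ n ≥ n₀, ∀ (F : Finset (Finset ℕ)) (a z : ℝ)
      (Adm : Finset (Finset ℕ) → Prop), IsKGraphOn (k' + 1) n F → (σ : ℝ) - 1 + ε ≤ a →
      a * (n.choose k' : ℝ) ≤ F.card → 0 ≤ z → z ≤ η * (a * (n : ℝ) ^ k' / (n : ℝ) ^ ℓ) →
      (∀ S, Adm S → S.Nonempty → S.card < H.card →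
        ((F.filter fun E => ¬ Adm (insert E S)).card : ℝ) ≤ z) →
      (∀ E ∈ F, Adm {E}) →
      ∃ φ : α → ℕ, Set.InjOn φ ↑(vertexSet H) ∧ (∀ E ∈ H, E.image φ ∈ F) ∧
        Adm (H.image fun E => E.image φ) := by
  obtain ⟨⟨S, hS, hSc⟩, -⟩ := hσ
  have hσ1 : 1 ≤ σ := hSc ▸ crosscut_pos hne hS
  have hσr : (1 : ℝ) ≤ σ := by exact_mod_cast hσ1
  set w := max 1 (vertexSet H).card with hw
  have hw1 : 1 ≤ w := le_max_left _ _
  have hwv : (vertexSet H).card ≤ w := le_max_right _ _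
  obtain ⟨c, hc, m0, hcn⟩ := choose_lower k'
  obtain ⟨δ0, hδ0, m1, hcen⟩ := center k' ℓ w (by omega) hw1 1 (ε * c) one_pos (by positivity)
  obtain ⟨δ1, hδ1, m2, hpeel⟩ := peel k' ℓ w (by omega) hw1 (ε * c / 2) (by positivity)
  obtain ⟨δ2, hδ2, m3, hclosed⟩ := closed k' ℓ w σ hℓ hw1
    (ε * c / 2 * (δ0 * δ1) / 2 ^ (k' + σ)) (by positivity)
  set mm := min 1 (min δ1 δ2) with hmm
  have hmm0 : 0 < mm := lt_min one_pos (lt_min hδ1 hδ2)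
  have hmm1 : mm ≤ 1 := min_le_left _ _
  have hmm2 : mm ≤ δ1 := (min_le_right _ _).trans (min_le_left _ _)
  have hmm3 : mm ≤ δ2 := (min_le_right _ _).trans (min_le_right _ _)
  set K0 : ℝ := ((k' + 1 : ℕ) : ℝ) ^ (k' + 1) with hK0
  have hK0p : 0 < K0 := by positivity
  refine ⟨δ0 * c * mm / (2 * K0), by positivity, max 1 (max m0 (max m1 (max m2 m3))), ?_⟩
  intro n hn F a z Adm hF ha hFa hz0 hzη hz hsing
  have hn1 : 1 ≤ n := le_trans (le_max_left _ _) hn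
  have hn2 := le_trans (le_max_right _ _) hn
  have hm0 : m0 ≤ n := le_trans (le_max_left _ _) hn2
  have hn3 := le_trans (le_max_right _ _) hn2
  have hm1 : m1 ≤ n := le_trans (le_max_left _ _) hn3
  have hn4 := le_trans (le_max_right _ _) hn3
  have hm2 : m2 ≤ n := le_trans (le_max_left _ _) hn4
  have hm3 : m3 ≤ n := le_trans (le_max_right _ _) hn4
  have hnr : (0 : ℝ) < n := by exact_mod_cast hn1
  have ha0 : 0 < a := by linarith
  have haε : ε ≤ a := by linarith
  by_contra hno
  have hT1 : T1free (k' + 1) ℓ w F (z * K0) := by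
    intro A hA hAF p q hpq L hg
    by_contra hlt
    exact hno (embed_type1 H hH h2 hov hwv F Adm z hz hsing A hA hAF p q hpq L hg
      (by push Not at hlt; exact hlt))
  have hC := hcn n hm0
  set N : ℝ := (n : ℝ) ^ k' with hN
  set Q : ℝ := (n : ℝ) ^ ℓ with hQ
  have hN0 : 0 < N := by positivity
  have hQ0 : 0 < Q := by positivity
  have hzK : z * K0 ≤ δ0 * c * mm / 2 * a * N / Q := by
    have h3 := mul_le_mul_of_nonneg_right hzη hK0p.le
    refine h3.trans (le_of_eq ?_)
    field_simp
  have hFlow : c * a * N ≤ F.card := by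
    have := mul_le_mul_of_nonneg_left hC ha0.le
    linarith
  -- step 1
  obtain ⟨G0, hG0, -, hG0c, x0, hx0, hi0⟩ := hcen n hm1 (F.card : ℝ) (z * K0) F F subset_rfl hF
    (by
      refine le_trans ?_ hFlow
      have : ε * (c * N) ≤ a * (c * N) := mul_le_mul_of_nonneg_right haε (by positivity)
      linarith)
    (by simp) hT1
    (by
      refine lt_of_le_of_lt hzK ?_
      apply div_lt_div_of_pos_right _ hQ0
      have h4 : δ0 * (c * a * N) ≤ δ0 * F.card := mul_le_mul_of_nonneg_left hFlow hδ0.le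
      have h5 : 0 < δ0 * (c * a * N) := by positivity
      have h6 : δ0 * (c * a * N) * mm ≤ δ0 * (c * a * N) * 1 :=
        mul_le_mul_of_nonneg_left hmm1 h5.le
      linarith)
  have hup : δ0 * F.card ≤ N := by
    refine hG0c.trans ?_
    have := erase_card_le G0 (fun E hE => hF E (hG0 hE)) x0 hx0 hi0
    rw [hN]
    exact_mod_cast this
  have hacc : δ0 * c * a ≤ 1 := by
    have h4 : δ0 * (c * a * N) ≤ δ0 * F.card := mul_le_mul_of_nonneg_left hFlow hδ0.le
    have h5 : (δ0 * c * a) * N ≤ 1 * N := by linarith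
    exact le_of_mul_le_mul_right h5 hN0
  have hzmm : z * K0 ≤ mm / 2 * N / Q := by
    refine hzK.trans ?_
    apply div_le_div_of_nonneg_right _ hQ0.le
    have h5 : (δ0 * c * a) * (mm / 2 * N) ≤ 1 * (mm / 2 * N) :=
      mul_le_mul_of_nonneg_right hacc (by positivity)
    linarith
  have hzlt : ∀ δ : ℝ, mm ≤ δ → z * K0 < δ * N / Q := by
    intro δ hδ
    refine lt_of_le_of_lt hzmm ?_
    apply div_lt_div_of_pos_right _ hQ0
    apply mul_lt_mul_of_pos_right _ hN0
    linarith
  -- step 2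
  obtain ⟨G, hGF, hGc, x, hx, hmult⟩ := hpeel n hm2 (z * K0) F hF hT1 (hzlt δ1 hmm2) F subset_rfl
  -- step 3
  obtain ⟨D, hD, hDc, hDσ⟩ := heavy_count (σ := σ) hσ1 G (fun E hE => hF E (hGF hE)) x hx
    (1 / (δ0 * δ1)) (by
      intro T
      have h3 := hmult T
      have h4 : (G.card : ℝ) ≤ F.card := by exact_mod_cast Finset.card_le_card hGF
      have h5 : δ0 * G.card ≤ N := (mul_le_mul_of_nonneg_left h4 hδ0.le).trans hup
      rw [le_div_iff₀ (by positivity)]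
      have h6 := mul_le_mul_of_nonneg_left h3 hδ0.le
      have h7 : ((G.filter fun E => E.erase (x E) = T).card : ℝ) * (δ0 * δ1) * N ≤ 1 * N := by
        linarith
      exact le_of_mul_le_mul_right h7 hN0)
  have hDlow : ε * c / 2 * (δ0 * δ1) * N ≤ D.card := by
    have h3 : ((σ : ℝ) - 1 + ε) * n.choose k' ≤ a * n.choose k' :=
      mul_le_mul_of_nonneg_right ha (by positivity)
    have h4 := mul_le_mul_of_nonneg_left hC hε.le
    have h5 : ε * c / 2 * N ≤ D.card * (1 / (δ0 * δ1)) := by linarith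
    rw [mul_one_div, le_div_iff₀ (by positivity)] at h5
    linarith
  obtain ⟨R, xs, V2, r0, r1, r2, r3, r4, r5, r6, r7⟩ := setup F G hGF hF x hx D hD hDσ
  obtain ⟨U, hUR, hUne, g1, g2⟩ := hclosed n hm3 R xs F (z * K0) r6 r7 r1
    (fun u hu j i h => r2 u hu i (h ▸ r3 u hu j)) r5
    (by
      have h3 : (D.card : ℝ) ≤ 2 ^ (k' + σ) * R.card := by exact_mod_cast r0
      rw [div_mul_eq_mul_div, div_le_iff₀ (by positivity)]
      linarith) hT1 (hzlt δ2 hmm3)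
  refine hno (embed_type2 (by omega) H hH hov S hS hSc hwv F Adm z hz hsing U hUne xs V2
    (fun u hu => r1 u (hUR hu)) (fun u hu => r2 u (hUR hu)) (fun u hu => r3 u (hUR hu))
    (fun u hu => r4 u (hUR hu)) (fun u hu => r5 u (hUR hu)) (δ2 * N / Q) g1 g2 ?_)
  refine lt_of_le_of_lt ?_ (hzlt δ2 hmm3)
  apply mul_le_mul_of_nonneg_left _ hz0
  rw [hK0]
  apply pow_le_pow_right₀ _ (Nat.le_succ k')
  push_cast
  have : (0 : ℝ) ≤ k' := by positivity
  linarith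

/-! ### From copies to balanced supersaturation -/

def FullS {β : Type} [DecidableEq β] (t : ℕ) (d : ℝ) (K : Finset (Finset β)) (S : Finset β) :
    Prop := d ^ (t - S.card) < (uDeg K S : ℝ) + 1

def AdmS {β : Type} [DecidableEq β] (t : ℕ) (d : ℝ) (K : Finset (Finset β)) (S : Finset β) :
    Prop := ∀ S' ⊆ S, S'.Nonempty → ¬ FullS t d K S'

theorem uDeg_sum {β : Type} [DecidableEq β] (K : Finset (Finset β)) (t : ℕ)
    (hK : ∀ C ∈ K, C.card ≤ t) (S0 T : Finset β) :
    ∑ E ∈ T, uDeg K (insert E S0) ≤ t * uDeg K S0 := by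
  unfold uDeg
  simp only [Finset.card_filter]
  rw [Finset.sum_comm, Finset.mul_sum]
  apply Finset.sum_le_sum
  intro C hC
  by_cases hS : S0 ⊆ C
  · rw [if_pos hS, mul_one, ← Finset.card_filter]
    refine le_trans (Finset.card_le_card ?_) (hK C hC)
    intro E hE
    exact (Finset.mem_filter.1 hE).2 (Finset.mem_insert_self _ _)
  · rw [if_neg hS, mul_zero]
    apply le_of_eq
    apply Finset.sum_eq_zero
    intro E _
    rw [if_neg]
    exact fun h => hS ((Finset.subset_insert _ _).trans h)

theorem full_count {β : Type} [DecidableEq β] (K : Finset (Finset β)) (t : ℕ) (d : ℝ) (hd : 2 ≤ d)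
    (hK : ∀ C ∈ K, C.card ≤ t) (S0 T : Finset β)
    (hT : ∀ E ∈ T, E ∉ S0 ∧ FullS t d K (insert E S0)) :
    (T.card : ℝ) * d ^ (t - (S0.card + 1)) ≤ 2 * (t * uDeg K S0) := by
  have h1 : ∀ E ∈ T, d ^ (t - (S0.card + 1)) ≤ 2 * (uDeg K (insert E S0) : ℝ) := by
    intro E hE
    obtain ⟨h2, h3⟩ := hT E hE
    unfold FullS at h3
    rw [Finset.card_insert_of_notMem h2] at h3
    rcases Nat.eq_zero_or_pos (t - (S0.card + 1)) with h4 | h4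
    · rw [h4, pow_zero] at h3 ⊢
      have h5 : 0 < uDeg K (insert E S0) := by
        have : (0 : ℝ) < uDeg K (insert E S0) := by linarith
        exact_mod_cast this
      have h6 : (1 : ℝ) ≤ uDeg K (insert E S0) := by exact_mod_cast h5
      linarith
    · have h5 : d ^ 1 ≤ d ^ (t - (S0.card + 1)) := pow_le_pow_right₀ (by linarith) h4
      rw [pow_one] at h5
      linarith
  have h2 := Finset.sum_le_sum h1
  rw [Finset.sum_const, nsmul_eq_mul, ← Finset.mul_sum] at h2
  refine h2.trans ?_
  have h3 : ((∑ E ∈ T, uDeg K (insert E S0) : ℕ) : ℝ) ≤ ((t * uDeg K S0 : ℕ) : ℝ) :=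
    Nat.cast_le.2 (uDeg_sum K t hK S0 T)
  push_cast at h3
  linarith

theorem zbound {β : Type} [DecidableEq β] (K : Finset (Finset β)) (t : ℕ) (d : ℝ) (hd : 2 ≤ d)
    (hK : ∀ C ∈ K, C.card ≤ t) (hgr : Graded t d K) (F1 : Finset β)
    (hF1 : ∀ E ∈ F1, ¬ FullS t d K {E}) (S : Finset β) (hS : AdmS t d K S) (hSt : S.card < t) :
    ((F1.filter fun E => ¬ AdmS t d K (insert E S)).card : ℝ) ≤ 2 ^ t * (2 * t * d) := by
  have hsub : (F1.filter fun E => ¬ AdmS t d K (insert E S)) ⊆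
      (S.powerset.filter fun S0 => S0.Nonempty).biUnion
        (fun S0 => F1.filter fun E => E ∉ S0 ∧ FullS t d K (insert E S0)) := by
    intro E hE
    obtain ⟨h1, h2⟩ := Finset.mem_filter.1 hE
    unfold AdmS at h2
    push Not at h2
    obtain ⟨S', h3, h4, h5⟩ := h2
    have hES : E ∈ S' := by
      by_contra hcon
      exact hS S' (fun v hv => (Finset.mem_insert.1 (h3 hv)).resolve_left
        (fun h => hcon (h ▸ hv))) h4 h5
    have hins : insert E (S'.erase E) = S' := Finset.insert_erase hES
    rw [Finset.mem_biUnion]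
    refine ⟨S'.erase E, ?_, ?_⟩
    · rw [Finset.mem_filter, Finset.mem_powerset]
      constructor
      · intro v hv
        obtain ⟨v1, v2⟩ := Finset.mem_erase.1 hv
        exact (Finset.mem_insert.1 (h3 v2)).resolve_left v1
      · rw [Finset.nonempty_iff_ne_empty]
        intro h6
        rw [h6] at hins
        apply hF1 E h1
        have h7 : ({E} : Finset β) = S' := by rw [← hins]; rfl
        rw [h7]; exact h5
    · rw [Finset.mem_filter]
      refine ⟨h1, by simp, ?_⟩
      rw [hins]; exact h5
  have hd0 : 0 < d := by linarith
  have h1 : ∀ S0 ∈ S.powerset.filter (fun S0 => S0.Nonempty),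
      ((F1.filter fun E => E ∉ S0 ∧ FullS t d K (insert E S0)).card : ℝ) ≤ 2 * t * d := by
    intro S0 hS0
    obtain ⟨h2, h3⟩ := Finset.mem_filter.1 hS0
    have h4 := Finset.card_le_card (Finset.mem_powerset.1 h2)
    have h5 : 1 ≤ S0.card := h3.card_pos
    have h6 := full_count K t d hd hK S0
      (F1.filter fun E => E ∉ S0 ∧ FullS t d K (insert E S0))
      (fun E hE => (Finset.mem_filter.1 hE).2)
    have h7 := hgr S0 h5 (by omega)
    have h8 : d ^ (t - S0.card) = d ^ (t - (S0.card + 1)) * d := by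
      rw [← pow_succ]; congr 1; omega
    rw [h8] at h7
    have h9 : (0 : ℝ) < d ^ (t - (S0.card + 1)) := by positivity
    refine le_of_mul_le_mul_right ?_ h9
    refine h6.trans ?_
    have h10 := mul_le_mul_of_nonneg_left h7 (by positivity : (0 : ℝ) ≤ 2 * t)
    linarith
  have h2 : ((F1.filter fun E => ¬ AdmS t d K (insert E S)).card : ℝ) ≤
      ∑ S0 ∈ S.powerset.filter (fun S0 => S0.Nonempty),
        ((F1.filter fun E => E ∉ S0 ∧ FullS t d K (insert E S0)).card : ℝ) := by
    have := (Finset.card_le_card hsub).trans Finset.card_biUnion_le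
    exact_mod_cast this
  refine h2.trans ((Finset.sum_le_sum h1).trans ?_)
  rw [Finset.sum_const, nsmul_eq_mul]
  apply mul_le_mul_of_nonneg_right _ (by positivity)
  have h3 : (S.powerset.filter (fun S0 => S0.Nonempty)).card ≤ 2 ^ t := by
    refine (Finset.card_filter_le _ _).trans ?_
    rw [Finset.card_powerset]
    exact Nat.pow_le_pow_right (by norm_num) hSt.le
  exact_mod_cast h3

theorem uDeg_insert_le {β : Type} [DecidableEq β] (K : Finset (Finset β)) (C S : Finset β) :
    uDeg (insert C K) S ≤ uDeg K S + (if S ⊆ C then 1 else 0) := by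
  unfold uDeg
  rw [Finset.filter_insert]
  split_ifs
  · exact Finset.card_insert_le _ _
  · simp

/-- A maximal graded subfamily: every member of the ambient family contains a full set. -/
theorem exists_max_graded {β : Type} [DecidableEq β] (Cs : Finset (Finset β)) (t : ℕ) (ht : 1 ≤ t)
    (d : ℝ) (hd : 0 ≤ d) (hCs : ∀ C ∈ Cs, C.card = t) :
    ∃ K ⊆ Cs, Graded t d K ∧ ∀ C ∈ Cs, ¬ AdmS t d K C := by
  obtain ⟨K, hK, hmax⟩ := Finset.exists_max_image (Cs.powerset.filter fun K => Graded t d K)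
    Finset.card ⟨∅, by
      rw [Finset.mem_filter]
      refine ⟨by simp, ?_⟩
      intro S _ _
      simp only [uDeg, Finset.filter_empty, Finset.card_empty, Nat.cast_zero]
      positivity⟩
  obtain ⟨hK1, hK2⟩ := Finset.mem_filter.1 hK
  have hKs := Finset.mem_powerset.1 hK1
  refine ⟨K, hKs, hK2, fun C hC hadm => ?_⟩
  have hCne : C.Nonempty := by
    rw [← Finset.card_pos, hCs C hC]; omega
  have hCK : C ∉ K := by
    intro hmem
    apply hadm C subset_rfl hCne
    unfold FullS
    rw [hCs C hC, Nat.sub_self, pow_zero]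
    have : 0 < uDeg K C := Finset.card_pos.2 ⟨C, Finset.mem_filter.2 ⟨hmem, subset_rfl⟩⟩
    have : (0 : ℝ) < uDeg K C := by exact_mod_cast this
    linarith
  have h1 := hmax (insert C K) (by
    rw [Finset.mem_filter, Finset.mem_powerset]
    refine ⟨Finset.insert_subset hC hKs, ?_⟩
    intro S hS1 hS2
    have h2 : (uDeg (insert C K) S : ℝ) ≤ uDeg K S + (if S ⊆ C then 1 else 0) := by
      exact_mod_cast uDeg_insert_le K C S
    by_cases hSC : S ⊆ C
    · have h3 := hadm S hSC (Finset.card_pos.1 hS1)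
      unfold FullS at h3
      rw [if_pos hSC] at h2
      linarith
    · rw [if_neg hSC] at h2
      have := hK2 S hS1 hS2
      linarith)
  rw [Finset.card_insert_of_notMem hCK] at h1
  omega

theorem copy_card {α : Type} [DecidableEq α] (H : Finset (Finset α)) (K : Finset (Finset ℕ))
    (h : IsCopyOf H K) : K.card = H.card := by
  obtain ⟨φ, hφ, rfl⟩ := h
  convert Finset.card_image_of_injOn (s := H) (f := fun E => E.image φ) ?_
  intro E hE E' hE' hEE
  have hsub : ∀ E ∈ H, E ⊆ vertexSet H := fun E hE v hv => mem_vertexSet.2 ⟨E, hE, hv⟩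
  have key : ∀ E ∈ H, ∀ E' ∈ H, E.image φ = E'.image φ → E ⊆ E' := by
    intro E hE E' hE' h v hv
    have h1 : φ v ∈ E'.image φ := h ▸ Finset.mem_image_of_mem φ hv
    obtain ⟨v', hv', hvv⟩ := Finset.mem_image.1 h1
    exact hφ (hsub E' hE' hv') (hsub E hE hv) hvv ▸ hv'
  exact Finset.Subset.antisymm (key E hE E' hE' hEE) (key E' hE' E hE hEE.symm)

theorem overlap_small {α : Type} [DecidableEq α] (k' ℓ : ℕ) (H : Finset (Finset α))
    (hu : ∀ E ∈ H, E.card = k' + 1) (h2 : TwoContractible H) (hov : Overlapping ℓ H) :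
    Overlapping (min ℓ (k' - 1)) H := by
  intro E hE P hP hne
  refine le_min (hov E hE P hP hne) ?_
  have h3 := h2 E hE
  have h4 : (E ∩ P) ∪ (E.filter fun v => vdeg H v = 1) ⊆ E := by
    intro v hv
    rcases Finset.mem_union.1 hv with h | h
    · exact (Finset.mem_inter.1 h).1
    · exact (Finset.mem_filter.1 h).1
  have h5 : Disjoint (E ∩ P) (E.filter fun v => vdeg H v = 1) := by
    rw [Finset.disjoint_left]
    intro v hv hv2
    obtain ⟨h6, h7⟩ := Finset.mem_inter.1 hv
    exact vdeg_ne_one hE hP hne h6 h7 (Finset.mem_filter.1 hv2).2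
  have h6 := Finset.card_le_card h4
  rw [Finset.card_union_of_disjoint h5, hu E hE] at h6
  omega

theorem hypertree_nonempty {α : Type} [DecidableEq α] (H : Finset (Finset α))
    (h : IsHypertree H) : H.Nonempty := by
  cases h with
  | single E => exact Finset.singleton_nonempty E
  | grow E F hH hE hF hint => exact Finset.insert_nonempty _ _

/-- optimal balanced supersaturation: for a 2-contractible `ℓ`-overlapping
`k`-tree `H` with `t` edges and cross-cut number `σ`, and `ε > 0`, any `k`-graph with
`a·C(n,k−1)` edges, `a ≥ σ−1+ε`, contains a collection `K` of copies of `H` with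
`|K| ≥ c'·a·n^{k−1}·(a·n^{k−ℓ−1})^{t−1}` and `Δ_b(K) ≤ c·τ^{b−1}·|K|/|F|` for
`1 ≤ b ≤ t`, where `τ = 1/(a·n^{k−ℓ−1})`. -/
theorem stmt_16 {α : Type} [DecidableEq α] (k ℓ t σ : ℕ) (hk : 4 ≤ k)
    (ε : ℝ) (hε : 0 < ε)
    (H : Finset (Finset α)) (hH : IsKTree k H) (h2 : TwoContractible H)
    (hov : Overlapping ℓ H) (hte : H.card = t) (hσ : IsCrosscutNumber H σ) :
    ∃ c c' : ℝ, 0 < c ∧ 0 < c' ∧ ∃ n₀ : ℕ, ∀ n ≥ n₀,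
      ∀ F : Finset (Finset ℕ), ∀ a : ℝ, IsKGraphOn k n F →
      (F.card : ℝ) = a * (n.choose (k - 1) : ℝ) → (σ : ℝ) - 1 + ε ≤ a →
      ∃ K : Finset (Finset (Finset ℕ)),
        (∀ A ∈ K, A ⊆ F ∧ IsCopyOf H A) ∧
        c' * a * (n : ℝ) ^ (k - 1) * (a * (n : ℝ) ^ (k - ℓ - 1)) ^ (t - 1)
          ≤ (K.card : ℝ) ∧
        ∀ b : ℕ, 1 ≤ b → b ≤ t → ∀ S : Finset (Finset ℕ), S.card = b →
          (∃ A ∈ K, S ⊆ A) →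
          (uDeg K S : ℝ) ≤
            c * (1 / (a * (n : ℝ) ^ (k - ℓ - 1))) ^ (b - 1) * (K.card : ℝ) / (F.card : ℝ) := by
  obtain ⟨k', rfl⟩ : ∃ k', k = k' + 1 := ⟨k - 1, by omega⟩
  have hk3 : 3 ≤ k' := by omega
  simp only [Nat.add_sub_cancel]
  have hne := hypertree_nonempty H hH.1
  have ht : 1 ≤ t := hte ▸ hne.card_pos
  have hov0 := overlap_small k' ℓ H hH.2 h2 hov
  set ℓ0 := min ℓ (k' - 1) with hℓ0
  have hℓ1 : ℓ0 + 1 ≤ k' := by omega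
  have hσ1 : (1 : ℝ) ≤ σ := by
    obtain ⟨⟨S, hS, hSc⟩, -⟩ := hσ
    have := crosscut_pos hne hS
    rw [hSc] at this
    exact_mod_cast this
  obtain ⟨η, hη, n1, hKP⟩ := KP k' ℓ0 σ hℓ1 H hne hH h2 hov0 hσ (ε / 2) (by linarith)
  obtain ⟨cc, hcc, n2, hch⟩ := choose_lower k'
  have htr : (1 : ℝ) ≤ t := by exact_mod_cast ht
  have htpos : (0 : ℝ) < t := by linarith
  obtain ⟨δ, hδ, hδ1, hδη⟩ : ∃ δ : ℝ, 0 < δ ∧ δ ≤ 1 ∧ δ * (2 ^ (t + 2) * t) ≤ η := by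
    refine ⟨min 1 (η / (2 ^ (t + 2) * t)), lt_min one_pos (by positivity), min_le_left _ _, ?_⟩
    rw [← le_div_iff₀ (by positivity)]
    exact min_le_right _ _
  obtain ⟨s, hs⟩ : ∃ s : ℝ, s = σ - 1 + ε := ⟨_, rfl⟩
  have hsε : ε ≤ s := by linarith
  have hs0 : 0 < s := by linarith
  obtain ⟨x, hx0, hx2, hxs⟩ : ∃ x : ℝ, 0 < x ∧ x ≤ 1 / 2 ∧ x * s = ε / 2 := by
    refine ⟨ε / (2 * s), by positivity, ?_, by field_simp⟩
    rw [div_le_iff₀ (by positivity)]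
    linarith
  obtain ⟨c1, hc1, hc1x⟩ : ∃ c1 : ℝ, 0 < c1 ∧ 2 * t * c1 = x :=
    ⟨x / (2 * t), by positivity, by field_simp⟩
  obtain ⟨n3, hn3⟩ := exists_nat_ge (2 / (δ * ε))
  refine ⟨1 / (c1 * δ ^ t), c1 * cc * δ ^ (t - 1), by positivity, by positivity,
    n1 + n2 + n3 + k' + 1, fun n hn F a hF hFc ha => ?_⟩
  have hn1 : n ≥ n1 := by omega
  have hn2 : n ≥ n2 := by omega
  have hnr : (1 : ℝ) ≤ n := by exact_mod_cast (by omega : 1 ≤ n)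
  have hn0 : (0 : ℝ) < n := by linarith
  have hn3' : 2 / (δ * ε) ≤ (n : ℝ) := hn3.trans (by exact_mod_cast (by omega : n3 ≤ n))
  rw [div_le_iff₀ (by positivity)] at hn3'
  have hsa : s ≤ a := by linarith
  have ha0 : 0 < a := by linarith
  have hC0 : (0 : ℝ) < n.choose k' := by exact_mod_cast Nat.choose_pos (by omega)
  have hF0 : (0 : ℝ) < F.card := by rw [hFc]; positivity
  have hexp : k' + 1 - ℓ - 1 ≤ k' - ℓ0 := by omega
  obtain ⟨D0, hD0⟩ : ∃ D0 : ℝ, D0 = a * (n : ℝ) ^ (k' - ℓ0) := ⟨_, rfl⟩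
  obtain ⟨D, hD⟩ : ∃ D : ℝ, D = a * (n : ℝ) ^ (k' + 1 - ℓ - 1) := ⟨_, rfl⟩
  have hDD : D ≤ D0 := by
    rw [hD, hD0]
    exact mul_le_mul_of_nonneg_left (pow_le_pow_right₀ hnr hexp) ha0.le
  have hDpos : 0 < D := by rw [hD]; positivity
  have hD0pos : 0 < D0 := by linarith
  have hD0' : a * (n : ℝ) ^ k' / (n : ℝ) ^ ℓ0 = D0 := by
    rw [div_eq_iff (by positivity), hD0, mul_assoc, ← pow_add]
    congr 2
    omega
  obtain ⟨d, hd⟩ : ∃ d : ℝ, d = δ * D0 := ⟨_, rfl⟩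
  have hd2 : 2 ≤ d := by
    have h1 : (n : ℝ) ^ 1 ≤ (n : ℝ) ^ (k' - ℓ0) := pow_le_pow_right₀ hnr (by omega)
    rw [pow_one] at h1
    have h3 : ε * n ≤ D0 := by
      rw [hD0]
      exact mul_le_mul (by linarith) h1 hn0.le ha0.le
    have h4 : δ * (ε * n) ≤ δ * D0 := mul_le_mul_of_nonneg_left h3 hδ.le
    rw [hd]
    linarith
  have hd0 : 0 < d := by linarith
  obtain ⟨K, hKs, hgr, hmax⟩ := exists_max_graded (copies H F) t ht d hd0.le (by
    intro C hC
    rw [← hte]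
    exact copy_card H C (Finset.mem_filter.1 hC).2)
  have hKcop : ∀ A ∈ K, A ⊆ F ∧ IsCopyOf H A := by
    intro A hA
    have h := Finset.mem_filter.1 (hKs hA)
    exact ⟨Finset.mem_powerset.1 h.1, h.2⟩
  have hKt : ∀ C ∈ K, C.card ≤ t := by
    intro C hC
    rw [← hte]
    exact (copy_card H C (hKcop C hC).2).le
  have hKbig : c1 * F.card * d ^ (t - 1) ≤ K.card := by
    by_contra hlt
    push Not at hlt
    obtain ⟨T, hT⟩ : ∃ T, T = F.filter fun E => FullS t d K {E} := ⟨_, rfl⟩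
    obtain ⟨F1, hF1⟩ : ∃ F1, F1 = F.filter fun E => ¬ FullS t d K {E} := ⟨_, rfl⟩
    have hsum : (T.card : ℝ) + F1.card = F.card := by
      rw [hT, hF1]
      exact_mod_cast Finset.card_filter_add_card_filter_not (s := F) (fun E => FullS t d K {E})
    have hTc : (T.card : ℝ) ≤ x * F.card := by
      have h1 := full_count K t d hd2 hKt ∅ T (by
        intro E hE
        rw [hT] at hE
        exact ⟨Finset.notMem_empty _, by simpa using (Finset.mem_filter.1 hE).2⟩)
      have h3 : uDeg K ∅ = K.card := by simp [uDeg]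
      rw [h3, Finset.card_empty, Nat.zero_add] at h1
      have h4 : (2 : ℝ) * (t * K.card) ≤ x * F.card * d ^ (t - 1) := by
        have : (2 : ℝ) * t * K.card ≤ 2 * t * (c1 * F.card * d ^ (t - 1)) :=
          mul_le_mul_of_nonneg_left hlt.le (by positivity)
        rw [← hc1x]
        linarith
      exact le_of_mul_le_mul_right (h1.trans h4) (by positivity)
    have ha1 : (σ : ℝ) - 1 + ε / 2 ≤ (1 - x) * a := by
      have : (1 - x) * s ≤ (1 - x) * a := mul_le_mul_of_nonneg_left hsa (by linarith)
      linarith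
    have ha12 : a / 2 ≤ (1 - x) * a := by
      have : (1 / 2) * a ≤ (1 - x) * a := mul_le_mul_of_nonneg_right (by linarith) ha0.le
      linarith
    have hz : (2 : ℝ) ^ t * (2 * t * d) ≤
        η * ((1 - x) * a * (n : ℝ) ^ k' / (n : ℝ) ^ ℓ0) := by
      have h1 : (1 - x) * a * (n : ℝ) ^ k' / (n : ℝ) ^ ℓ0 = (1 - x) * D0 := by
        rw [← hD0']; ring
      rw [h1]
      have h3 : δ * (2 ^ (t + 2) * t) * ((1 / 2) * D0) ≤ η * ((1 - x) * D0) := by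
        apply mul_le_mul hδη _ (by positivity) hη.le
        exact mul_le_mul_of_nonneg_right (by linarith) hD0pos.le
      refine le_trans (le_of_eq ?_) h3
      rw [hd, pow_add]
      ring
    obtain ⟨φ, hφ, hφF, hφA⟩ := hKP n hn1 F1 ((1 - x) * a) (2 ^ t * (2 * t * d)) (AdmS t d K)
      (fun E hE => hF E (by rw [hF1] at hE; exact (Finset.mem_filter.1 hE).1)) ha1
      (by
        have : (1 - x) * a * (n.choose k' : ℝ) = F.card - x * F.card := by rw [hFc]; ring
        linarith)
      (by positivity) hz
      (by
        intro S hS _ hSt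
        have := zbound K t d hd2 hKt hgr F1
          (by intro E hE; rw [hF1] at hE; exact (Finset.mem_filter.1 hE).2) S hS (hte ▸ hSt)
        convert this)
      (by
        intro E hE S' hS' hne'
        rw [hF1] at hE
        rcases Finset.subset_singleton_iff.1 hS' with h | h
        · rw [h] at hne'
          exact absurd hne' Finset.not_nonempty_empty
        · rw [h]
          exact (Finset.mem_filter.1 hE).2)
    refine hmax _ ?_ hφA
    refine Finset.mem_filter.2 ⟨Finset.mem_powerset.2 ?_, φ, hφ, ?_⟩
    · intro P hP
      obtain ⟨E, hE, rfl⟩ := Finset.mem_image.1 hP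
      have := hφF E hE
      rw [hF1] at this
      exact (Finset.mem_filter.1 this).1
    · rfl
  refine ⟨K, hKcop, ?_, ?_⟩
  · rw [← hD]
    refine le_trans ?_ hKbig
    have h1 : D ^ (t - 1) ≤ D0 ^ (t - 1) := pow_le_pow_left₀ hDpos.le hDD _
    have h3 : cc * (n : ℝ) ^ k' ≤ n.choose k' := hch n hn2
    rw [hFc, hd, mul_pow]
    calc c1 * cc * δ ^ (t - 1) * a * (n : ℝ) ^ k' * D ^ (t - 1)
        = (c1 * δ ^ (t - 1) * a) * ((cc * (n : ℝ) ^ k') * D ^ (t - 1)) := by ring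
      _ ≤ (c1 * δ ^ (t - 1) * a) * ((n.choose k' : ℝ) * D0 ^ (t - 1)) := by
          apply mul_le_mul_of_nonneg_left _ (by positivity)
          exact mul_le_mul h3 h1 (by positivity) hC0.le
      _ = _ := by ring
  · intro b hb hbt S hS _
    rw [← hD]
    have h1 := hgr S (by omega) (by omega)
    rw [hS] at h1
    have h1' : (uDeg K S : ℝ) ≤ d ^ (t - b) := by convert h1
    refine h1'.trans ?_
    rw [le_div_iff₀ hF0]
    have h3 : d ^ (t - 1) = d ^ (t - b) * d ^ (b - 1) := by
      rw [← pow_add]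
      congr 1
      omega
    have h4 : δ ^ t ≤ δ ^ (b - 1) := pow_le_pow_of_le_one hδ.le hδ1 (by omega)
    have h5 : δ ^ (b - 1) * D ^ (b - 1) ≤ d ^ (b - 1) := by
      rw [← mul_pow, hd]
      exact pow_le_pow_left₀ (by positivity) (mul_le_mul_of_nonneg_left hDD hδ.le) _
    have h6 : δ ^ t * D ^ (b - 1) ≤ d ^ (b - 1) :=
      (mul_le_mul_of_nonneg_right h4 (by positivity)).trans h5
    have h7 : d ^ (t - b) * F.card * (c1 * δ ^ t * D ^ (b - 1)) ≤ K.card := by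
      refine le_trans ?_ hKbig
      rw [h3]
      calc d ^ (t - b) * F.card * (c1 * δ ^ t * D ^ (b - 1))
          = (c1 * F.card * d ^ (t - b)) * (δ ^ t * D ^ (b - 1)) := by ring
        _ ≤ (c1 * F.card * d ^ (t - b)) * d ^ (b - 1) :=
            mul_le_mul_of_nonneg_left h6 (by positivity)
        _ = _ := by ring
    have h8 : 1 / (c1 * δ ^ t) * (1 / D) ^ (b - 1) * (K.card : ℝ)
        = K.card / (c1 * δ ^ t * D ^ (b - 1)) := by
      rw [one_div_pow]
      field_simp
    rw [h8, le_div_iff₀ (by positivity)]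
    exact h7
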